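/- arXiv:2107.01394 — 3 statements merged into one kernel-verified Lean document; each statement's English description precedes it below -/
import Mathlib

section
/- Let α, β ≥ 0 with α ≠ β, and let F₁ : (0,∞)² → (0,∞)² be given by F₁(x,y) = (y(1+βxy)/(1+αxy), x(1+αxy)/(1+βxy)). Let X and Y be (0,∞)-valued independent random variables with twice-differentiable densities that are strictly positive throughout (0,∞), and set (U,V) := F₁(X,Y). Then U and V are independent if and only if there exist λ ∈ ℝ and c₁, c₂ > 0 such that X ~ GIG(λ, c₁α, c₂) and Y ~ GIG(λ, c₂β, c₁). -/
open MeasureTheory ProbabilityTheory Set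

/-- The (unnormalized-then-normalized) density of the generalized inverse Gaussian
distribution GIG(l, c1, c2): proportional to `x^(l-1) * exp(-c1*x - c2/x)` on `(0,∞)`. -/
noncomputable def gigPdf (l c1 c2 : ℝ) : ℝ → ℝ := fun x =>
  if 0 < x then
    x ^ (l - 1) * Real.exp (-(c1 * x) - c2 / x) /
      (∫ t in Set.Ioi (0 : ℝ), t ^ (l - 1) * Real.exp (-(c1 * t) - c2 / t))
  else 0

/-- The transformation F₁ with parameters α, β. -/
noncomputable def F1 (α β : ℝ) : ℝ × ℝ → ℝ × ℝ := fun p =>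
  (p.2 * (1 + β * p.1 * p.2) / (1 + α * p.1 * p.2),
   p.1 * (1 + α * p.1 * p.2) / (1 + β * p.1 * p.2))

/-!
In logarithmic coordinates `F1 α β` is `(r, s) ↦ (s + g (r + s), r - g (r + s))` for an explicit
`g`, and on the quadrant it is an involution preserving Lebesgue measure. So `U` and `V` are
independent if and only if `a (s + g (r + s)) + b (r - g (r + s))` splits as `φ r + ψ s`, where `a`
and `b` are the logarithms of the densities of `X` and `Y`. Applying `∂²/∂r∂s` removes `φ` and `ψ`,
and for fixed `p` what remains is a relation between quadratic polynomials in `exp q`. Comparing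
coefficients gives `deriv a p = k - c₁ * α * exp p + c₂ * exp (-p)` and a similar formula for `b`,
so the densities are proportional to GIG weights. Their integrability at zero and at infinity forces
`0 < c₁` and `0 < c₂`. Conversely, `F1` maps a product of GIG weights to another such product.
-/

section Calculus

open Real

variable {α β : ℝ} {A B : ℝ → ℝ}

/-- The relation obtained from the separated functional equation for the logarithms of two
densities by differentiating once in each variable; `A` and `B` stand for the derivatives of these
logarithms in the coordinates `p = log x`, `q = log y`. -/
def MixedDerivEquation (α β : ℝ) (A B : ℝ → ℝ) : Prop :=
  ∀ p q,
    (1 + 2 * β * exp (p + q) + α * β * exp (p + q) ^ 2) * deriv A p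
        + (1 - α * β * exp (p + q) ^ 2) * A p
      = (1 + 2 * α * exp (p + q) + α * β * exp (p + q) ^ 2) * deriv B q
        + (1 - α * β * exp (p + q) ^ 2) * B q

namespace MixedDerivEquation

lemma symm (h : MixedDerivEquation α β A B) : MixedDerivEquation β α B A := by
  intro q p
  rw [add_comm q p]
  linear_combination -h p q

lemma log_left (h : MixedDerivEquation α β A B) {x : ℝ} (hx : 0 < x) (q : ℝ) :
    (1 + 2 * β * (x * exp q) + α * β * (x * exp q) ^ 2) * deriv A (log x)
        + (1 - α * β * (x * exp q) ^ 2) * A (log x)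
      = (1 + 2 * α * (x * exp q) + α * β * (x * exp q) ^ 2) * deriv B q
        + (1 - α * β * (x * exp q) ^ 2) * B q := by
  simpa only [exp_add, exp_log hx] using h (log x) q

/- For fixed `p` both sides are quadratic polynomials in `y = exp q`. A quadratic `f` satisfies
`f 0 = 3 * f 1 - 3 * f 2 + f 3` and `f' 0 = (-5 * f 1 + 8 * f 2 - 3 * f 3) / 2`. -/
lemma exists_quadratic (h : MixedDerivEquation α β A B) (hβ : β ≠ 0) :
    ∃ a₀ a₁ a₂ b₀ b₁ b₂ : ℝ, ∀ p,
      deriv A p + A p = a₀ + 2 * (α * a₁) * exp p + a₂ * exp p ^ 2 ∧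
      exp p * deriv A p = b₀ + b₁ * exp p + b₂ * exp p ^ 2 := by
  have key (y : ℝ) (hy : 0 < y) : ∃ u v w : ℝ, ∀ p,
      (deriv A p + A p) + 2 * β * y * (exp p * deriv A p)
          + α * β * y ^ 2 * (exp p ^ 2 * (deriv A p - A p))
        = u + 2 * (α * v) * exp p + w * exp p ^ 2 :=
    ⟨deriv B (log y) + B (log y), y * deriv B (log y),
      α * β * y ^ 2 * (deriv B (log y) - B (log y)),
      fun p ↦ by linear_combination -(h.symm.log_left hy p)⟩
  obtain ⟨u₁, v₁, w₁, h₁⟩ := key 1 one_pos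
  obtain ⟨u₂, v₂, w₂, h₂⟩ := key 2 two_pos
  obtain ⟨u₃, v₃, w₃, h₃⟩ := key 3 three_pos
  refine ⟨3 * u₁ - 3 * u₂ + u₃, 3 * v₁ - 3 * v₂ + v₃, 3 * w₁ - 3 * w₂ + w₃,
    (-5 * u₁ + 8 * u₂ - 3 * u₃) / (4 * β), 2 * α * (-5 * v₁ + 8 * v₂ - 3 * v₃) / (4 * β),
    (-5 * w₁ + 8 * w₂ - 3 * w₃) / (4 * β), fun p ↦ ⟨?_, ?_⟩⟩
  · linear_combination 3 * h₁ p - 3 * h₂ p + h₃ p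
  · field_simp
    linear_combination -5 * h₁ p + 8 * h₂ p - 3 * h₃ p

end MixedDerivEquation

lemma hasDerivAt_add_mul_exp_add_mul_exp_neg (k m n p : ℝ) :
    HasDerivAt (fun p ↦ k + m * exp p + n * exp (-p)) (m * exp p - n * exp (-p)) p :=
  ((((hasDerivAt_exp p).const_mul m).const_add k).add
    ((hasDerivAt_neg p).exp.const_mul n)).congr_deriv (by ring)

/- The second relation determines `deriv A`, so the first one gives
`A p = a₀ - b₁ + (a₁ - b₂) * exp p + a₂ * exp p ^ 2 - b₀ * exp (-p)`. Comparing its derivative with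
the second relation forces `b₁ = 0`, `a₂ = 0` and `a₁ = 2 * b₂`. -/
lemma eq_add_exp_of_quadratic (hA : Differentiable ℝ A) {a₀ a₁ a₂ b₀ b₁ b₂ : ℝ}
    (h₁ : ∀ p, deriv A p + A p = a₀ + a₁ * exp p + a₂ * exp p ^ 2)
    (h₂ : ∀ p, exp p * deriv A p = b₀ + b₁ * exp p + b₂ * exp p ^ 2) (p : ℝ) :
    A p = a₀ + a₁ / 2 * exp p - b₀ * exp (-p) := by
  have hA_eq (p : ℝ) : exp p * A p
      = (a₀ + a₁ * exp p + a₂ * exp p ^ 2) * exp p - (b₀ + b₁ * exp p + b₂ * exp p ^ 2) := by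
    linear_combination exp p * h₁ p - h₂ p
  have hpoly (x : ℝ) (hx : 0 < x) : b₁ + 2 * b₂ * x = a₁ * x + 2 * a₂ * x ^ 2 := by
    have hexp := hasDerivAt_exp (log x)
    have hleft := hexp.mul (hA (log x)).hasDerivAt
    have hright := ((((hexp.const_mul a₁).const_add a₀).add ((hexp.pow 2).const_mul a₂)).mul
      hexp).sub (((hexp.const_mul b₁).const_add b₀).add ((hexp.pow 2).const_mul b₂))
    have hderiv := hleft.unique (hright.congr_of_eventuallyEq (.of_forall hA_eq))
    have hA_log := hA_eq (log x)
    have hA'_log := h₂ (log x)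
    simp only [Pi.add_apply, Pi.pow_apply, exp_log hx] at hderiv hA_log hA'_log
    apply mul_left_cancel₀ hx.ne'
    push_cast at hderiv
    linear_combination hderiv - hA_log - hA'_log
  have h1 := hpoly 1 one_pos
  have h2 := hpoly 2 two_pos
  have h3 := hpoly 3 three_pos
  obtain rfl : b₁ = 0 := by linarith
  obtain rfl : a₂ = 0 := by linarith
  obtain rfl : a₁ = 2 * b₂ := by linarith
  rw [exp_neg]
  field_simp
  linear_combination hA_eq p

lemma exists_eq_of_deriv_add_self (hB : Differentiable ℝ B) {k m : ℝ}
    (h : ∀ q, deriv B q + B q = k + 2 * m * exp q) :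
    ∃ c, ∀ q, B q = k + m * exp q + c * exp (-q) := by
  have hconst (q : ℝ) :
      HasDerivAt (fun q ↦ exp q * B q - k * exp q - m * exp q ^ 2) 0 q := by
    have hexp := hasDerivAt_exp q
    refine (((hexp.mul (hB q).hasDerivAt).sub (hexp.const_mul k)).sub
      ((hexp.pow 2).const_mul m)).congr_deriv ?_
    push_cast
    linear_combination exp q * h q
  refine ⟨exp 0 * B 0 - k * exp 0 - m * exp 0 ^ 2, fun q ↦ ?_⟩
  rw [← is_const_of_deriv_eq_zero (fun q ↦ (hconst q).differentiableAt)
    (fun q ↦ (hconst q).deriv) q 0, exp_neg]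
  field_simp
  ring

namespace MixedDerivEquation

lemma exists_solution_of_ne_zero (h : MixedDerivEquation α β A B) (hβ : β ≠ 0)
    (hA : Differentiable ℝ A) (hB : Differentiable ℝ B) :
    ∃ k c₁ c₂ : ℝ, (∀ p, A p = k - c₁ * α * exp p + c₂ * exp (-p)) ∧
      ∀ q, B q = k - c₂ * β * exp q + c₁ * exp (-q) := by
  obtain ⟨k, d, a₂, c₂, b₁, b₂, hquad⟩ := h.exists_quadratic hβ
  have hA_eq (p : ℝ) : A p = k + α * d * exp p + -c₂ * exp (-p) := by
    rw [eq_add_exp_of_quadratic hA (fun p ↦ (hquad p).1) (fun p ↦ (hquad p).2) p]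
    ring
  have hA'_eq (p : ℝ) : deriv A p = α * d * exp p - -c₂ * exp (-p) := by
    rw [funext hA_eq]
    exact (hasDerivAt_add_mul_exp_add_mul_exp_neg _ _ _ p).deriv
  have heq (x : ℝ) (hx : 0 < x) (q : ℝ) :
      k + 2 * α * d * x + 2 * β * exp q * (α * d * x ^ 2 + c₂)
          + α * β * exp q ^ 2 * (-k * x ^ 2 + 2 * c₂ * x)
        = (deriv B q + B q) + 2 * α * x * exp q * deriv B q
          + α * β * x ^ 2 * exp q ^ 2 * (deriv B q - B q) := by
    have hlog := h.log_left hx q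
    rw [hA_eq, hA'_eq, exp_neg, exp_log hx] at hlog
    field_simp at hlog
    apply mul_left_cancel₀ hx.ne'
    linear_combination hlog
  obtain ⟨c₁, hB_eq⟩ := exists_eq_of_deriv_add_self hB (k := k) (m := c₂ * β) fun q ↦ by
    linear_combination -3 * heq 1 one_pos q + 3 * heq 2 two_pos q - heq 3 three_pos q
  have hcoeff : α * d = -c₁ * α := by
    have hB'_eq : deriv B 0 = c₂ * β - c₁ := by
      rw [funext hB_eq]
      simpa using (hasDerivAt_add_mul_exp_add_mul_exp_neg k (c₂ * β) c₁ 0).deriv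
    have h₁ := heq 1 one_pos 0
    have h₂ := heq 2 two_pos 0
    rw [hB'_eq, hB_eq] at h₁ h₂
    simp only [exp_zero, neg_zero] at h₁ h₂
    linear_combination h₁ - h₂ / 4
  refine ⟨k, c₁, -c₂, fun p ↦ ?_, fun q ↦ ?_⟩
  · rw [hA_eq, hcoeff]
    ring
  · rw [hB_eq]
    ring

theorem exists_solution (h : MixedDerivEquation α β A B) (hαβ : α ≠ β)
    (hA : Differentiable ℝ A) (hB : Differentiable ℝ B) :
    ∃ k c₁ c₂ : ℝ, (∀ p, A p = k - c₁ * α * exp p + c₂ * exp (-p)) ∧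
      ∀ q, B q = k - c₂ * β * exp q + c₁ * exp (-q) := by
  rcases eq_or_ne β 0 with rfl | hβ
  · obtain ⟨k, c₂, c₁, hB_eq, hA_eq⟩ := h.symm.exists_solution_of_ne_zero hαβ hB hA
    exact ⟨k, c₁, c₂, hA_eq, hB_eq⟩
  · exact h.exists_solution_of_ne_zero hβ hA hB

end MixedDerivEquation

end Calculus

section Shift

open Real

/- Apply `∂²/∂r∂s` to the hypothesis, at the point `(r, s)` where the arguments of `a` and `b` are
`p` and `q`; there `r + s = p + q`. -/
lemma mixed_deriv_eq_zero_of_separated {a b g φ ψ : ℝ → ℝ}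
    (ha : Differentiable ℝ a) (ha' : Differentiable ℝ (deriv a))
    (hb : Differentiable ℝ b) (hb' : Differentiable ℝ (deriv b))
    (hg : Differentiable ℝ g) (hg' : Differentiable ℝ (deriv g))
    (h : ∀ r s, a (s + g (r + s)) + b (r - g (r + s)) = φ r + ψ s) (p q : ℝ) :
    deriv (deriv g) (p + q) * (deriv a p - deriv b q)
      + deriv g (p + q) * ((1 + deriv g (p + q)) * deriv (deriv a) p
        - (1 - deriv g (p + q)) * deriv (deriv b) q) = 0 := by
  let D : ℝ → ℝ → ℝ := fun r s ↦ deriv a (s + g (r + s)) * deriv g (r + s)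
    + deriv b (r - g (r + s)) * (1 - deriv g (r + s))
  have hD_deriv (r s : ℝ) : HasDerivAt φ (D r s) r := by
    have hgr := (hg (r + s)).hasDerivAt.comp_add_const r s
    have hsum := ((ha _).hasDerivAt.comp r (hgr.const_add s)).add
      ((hb _).hasDerivAt.comp r ((hasDerivAt_id r).sub hgr))
    exact (hsum.sub_const (ψ s)).congr_of_eventuallyEq
      (.of_forall fun r ↦ eq_sub_of_add_eq (h r s).symm)
  have hD_const (r s s' : ℝ) : D r s = D r s' := (hD_deriv r s).unique (hD_deriv r s')
  obtain ⟨r, s, hrs, hp, hq⟩ :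
      ∃ r s, r + s = p + q ∧ s + g (p + q) = p ∧ r - g (p + q) = q :=
    ⟨q + g (p + q), p - g (p + q), by ring, by ring, by ring⟩
  have hgs := (hg (r + s)).hasDerivAt.comp_const_add r s
  have hg's := (hg' (r + s)).hasDerivAt.comp_const_add r s
  have hDs := (((ha' (s + g (r + s))).hasDerivAt.comp s ((hasDerivAt_id s).add hgs)).mul hg's).add
    (((hb' (r - g (r + s))).hasDerivAt.comp s (hgs.const_sub r)).mul (hg's.const_sub 1))
  have hzero := hDs.unique ((hasDerivAt_const s (D r s)).congr_of_eventuallyEq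
    (.of_forall fun s' ↦ hD_const r s' s))
  simp only [Function.comp_apply, Pi.add_apply, id, hrs, hp, hq] at hzero
  linear_combination hzero

/-- The function `g` for which `F1 α β` reads `(r, s) ↦ (s + g (r + s), r - g (r + s))` in
logarithmic coordinates. -/
noncomputable def logShift (α β t : ℝ) : ℝ := log (1 + β * exp t) - log (1 + α * exp t)

variable {α β : ℝ}

lemma hasDerivAt_logShift (hα : 0 ≤ α) (hβ : 0 ≤ β) (t : ℝ) :
    HasDerivAt (logShift α β)
      ((β - α) * exp t / ((1 + β * exp t) * (1 + α * exp t))) t := by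
  have h₁ : 1 + α * exp t ≠ 0 := by positivity
  have h₂ : 1 + β * exp t ≠ 0 := by positivity
  refine (((((hasDerivAt_exp t).const_mul β).const_add 1).log h₂).sub
    ((((hasDerivAt_exp t).const_mul α).const_add 1).log h₁)).congr_deriv ?_
  field_simp
  ring

lemma deriv_logShift (hα : 0 ≤ α) (hβ : 0 ≤ β) :
    deriv (logShift α β) = fun t ↦ (β - α) * exp t / ((1 + β * exp t) * (1 + α * exp t)) :=
  funext fun t ↦ (hasDerivAt_logShift hα hβ t).deriv

lemma hasDerivAt_deriv_logShift (hα : 0 ≤ α) (hβ : 0 ≤ β) (t : ℝ) :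
    HasDerivAt (deriv (logShift α β))
      ((β - α) * exp t * (1 - α * β * exp t ^ 2) / ((1 + β * exp t) * (1 + α * exp t)) ^ 2) t := by
  have h : (1 + β * exp t) * (1 + α * exp t) ≠ 0 := by positivity
  have hexp := hasDerivAt_exp t
  rw [deriv_logShift hα hβ]
  refine ((hexp.const_mul (β - α)).div
    (((hexp.const_mul β).const_add 1).mul ((hexp.const_mul α).const_add 1)) h).congr_deriv ?_
  simp only [Pi.mul_apply]
  ring

theorem mixedDerivEquation_of_separated (hα : 0 ≤ α) (hβ : 0 ≤ β) (hαβ : α ≠ β)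
    {a b φ ψ : ℝ → ℝ}
    (ha : Differentiable ℝ a) (ha' : Differentiable ℝ (deriv a))
    (hb : Differentiable ℝ b) (hb' : Differentiable ℝ (deriv b))
    (h : ∀ r s, a (s + logShift α β (r + s)) + b (r - logShift α β (r + s)) = φ r + ψ s) :
    MixedDerivEquation α β (deriv a) (deriv b) := by
  intro p q
  have hmixed := mixed_deriv_eq_zero_of_separated ha ha' hb hb'
    (fun t ↦ (hasDerivAt_logShift hα hβ t).differentiableAt)
    (fun t ↦ (hasDerivAt_deriv_logShift hα hβ t).differentiableAt) h p q
  rw [(hasDerivAt_deriv_logShift hα hβ _).deriv, (hasDerivAt_logShift hα hβ _).deriv] at hmixed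
  have h₁ : 1 + α * exp (p + q) ≠ 0 := by positivity
  have h₂ : 1 + β * exp (p + q) ≠ 0 := by positivity
  field_simp at hmixed
  apply mul_left_cancel₀ (mul_ne_zero (sub_ne_zero.2 hαβ.symm) (exp_pos (p + q)).ne')
  linear_combination hmixed

end Shift

section LogDensity

open Real

variable {f : ℝ → ℝ}

lemma hasDerivAt_log_comp_exp (hpos : ∀ x ∈ Ioi (0 : ℝ), 0 < f x)
    (hf : ∀ x ∈ Ioi (0 : ℝ), DifferentiableAt ℝ f x) (p : ℝ) :
    HasDerivAt (fun p ↦ log (f (exp p))) (deriv f (exp p) * exp p / f (exp p)) p :=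
  ((hf _ (exp_pos p)).hasDerivAt.comp p (hasDerivAt_exp p)).log (hpos _ (exp_pos p)).ne'

lemma differentiable_log_comp_exp (hpos : ∀ x ∈ Ioi (0 : ℝ), 0 < f x)
    (hf : ∀ x ∈ Ioi (0 : ℝ), DifferentiableAt ℝ f x) :
    Differentiable ℝ fun p ↦ log (f (exp p)) :=
  fun p ↦ (hasDerivAt_log_comp_exp hpos hf p).differentiableAt

lemma differentiable_deriv_log_comp_exp (hpos : ∀ x ∈ Ioi (0 : ℝ), 0 < f x)
    (hf : ∀ x ∈ Ioi (0 : ℝ), DifferentiableAt ℝ f x)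
    (hf' : ∀ x ∈ Ioi (0 : ℝ), DifferentiableAt ℝ (deriv f) x) :
    Differentiable ℝ (deriv fun p ↦ log (f (exp p))) := by
  rw [funext fun p ↦ (hasDerivAt_log_comp_exp hpos hf p).deriv]
  intro p
  have hp := exp_pos p
  exact (((hf' _ hp).comp p differentiableAt_exp).mul differentiableAt_exp).div
    ((hf _ hp).comp p differentiableAt_exp) (hpos _ hp).ne'

end LogDensity

section GIG

open Real

/-- The density of the generalized inverse Gaussian distribution without its normalizing
constant. -/
noncomputable def gigWeight (l a b x : ℝ) : ℝ := x ^ (l - 1) * exp (-(a * x) - b / x)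

lemma gigWeight_pos (l a b : ℝ) {x : ℝ} (hx : 0 < x) : 0 < gigWeight l a b x := by
  unfold gigWeight
  positivity

@[fun_prop]
lemma measurable_gigWeight (l a b : ℝ) : Measurable (gigWeight l a b) := by
  unfold gigWeight
  fun_prop

lemma exists_eq_mul_gigWeight {f : ℝ → ℝ} {k a b : ℝ} (hpos : ∀ x ∈ Ioi (0 : ℝ), 0 < f x)
    (hf : Differentiable ℝ fun p ↦ log (f (exp p)))
    (h : ∀ p, deriv (fun p ↦ log (f (exp p))) p = k - a * exp p + b * exp (-p)) :
    ∃ C, ∀ x ∈ Ioi (0 : ℝ), f x = C * gigWeight (k + 1) a b x := by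
  let R : ℝ → ℝ := fun p ↦ log (f (exp p)) - (k * p - a * exp p - b * exp (-p))
  have hR (p : ℝ) : HasDerivAt R 0 p := by
    refine ((hf p).hasDerivAt.sub ((((hasDerivAt_id p).const_mul k).sub
      ((hasDerivAt_exp p).const_mul a)).sub ((hasDerivAt_neg p).exp.const_mul b))).congr_deriv ?_
    rw [h]
    ring
  have hR_const (p : ℝ) : R p = R 0 :=
    is_const_of_deriv_eq_zero (fun p ↦ (hR p).differentiableAt) (fun p ↦ (hR p).deriv) p 0
  refine ⟨exp (R 0), fun x (hx : 0 < x) ↦ ?_⟩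
  calc f x = exp (log (f x)) := (exp_log (hpos x hx)).symm
    _ = exp (R (log x) + (log x * k + (-(a * x) - b / x))) := by
      simp only [R, exp_neg, exp_log hx]
      congr 1
      ring
    _ = exp (R 0) * gigWeight (k + 1) a b x := by
      rw [hR_const, exp_add, exp_add, gigWeight, add_sub_cancel_right, rpow_def_of_pos hx]

lemma gigWeight_inv (l a b : ℝ) {x : ℝ} (hx : 0 < x) :
    gigWeight l a b x⁻¹ = x ^ 2 * gigWeight (-l) b a x := by
  rw [gigWeight, gigWeight, inv_rpow hx.le, ← rpow_neg hx.le, ← mul_assoc, ← rpow_natCast x 2,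
    ← rpow_add hx]
  congr 2
  · push_cast
    ring
  · rw [div_inv_eq_mul]
    ring

lemma integrableOn_gigWeight_swap {l a b : ℝ} (h : IntegrableOn (gigWeight l a b) (Ioi 0)) :
    IntegrableOn (gigWeight (-l) b a) (Ioi 0) := by
  refine ((integrableOn_Ioi_comp_rpow_iff (gigWeight l a b) (p := -1) (by norm_num)).2 h).congr_fun
    (fun x (hx : 0 < x) ↦ ?_) measurableSet_Ioi
  simp only [rpow_neg_one, gigWeight_inv l a b hx, smul_eq_mul, abs_neg, abs_one, one_mul]
  rw [← mul_assoc, ← rpow_natCast, ← rpow_add hx]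
  norm_num

/- Near zero, `exp (-b / x) ≥ (-b / x) ^ n / n!`, so `x ^ (l - 1 - n)` is integrable there. -/
lemma natCast_lt_of_integrableOn_gigWeight {l a b : ℝ} {n : ℕ} (hb : b ≤ 0) (hn : (-b) ^ n ≠ 0)
    (h : IntegrableOn (gigWeight l a b) (Ioi 0)) : (n : ℝ) < l := by
  have hpow_pos : 0 < (-b) ^ n := lt_of_le_of_ne (pow_nonneg (neg_nonneg.2 hb) n) hn.symm
  have hbound : ∀ x ∈ Ioo (0 : ℝ) 1,
      x ^ (l - 1 - n) ≤ n.factorial * exp |a| / (-b) ^ n * gigWeight l a b x := by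
    rintro x ⟨hx0, hx1⟩
    have hbx : 0 ≤ -b / x := div_nonneg (neg_nonneg.2 hb) hx0.le
    have hexp_b : (-b / x) ^ n / n.factorial ≤ exp (-b / x) :=
      pow_div_factorial_le_exp _ hbx n
    have hexp_a : exp (-|a|) ≤ exp (-(a * x)) := by
      have : a * x ≤ |a| * 1 := by gcongr; exact le_abs_self a
      exact exp_le_exp.2 (by linarith)
    calc x ^ (l - 1 - n)
        = n.factorial * exp |a| / (-b) ^ n
            * (x ^ (l - 1) * (exp (-|a|) * ((-b / x) ^ n / n.factorial))) := by
          rw [rpow_sub_natCast hx0.ne', exp_neg, div_pow]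
          field_simp
      _ ≤ n.factorial * exp |a| / (-b) ^ n
            * (x ^ (l - 1) * (exp (-(a * x)) * exp (-b / x))) := by
          gcongr
      _ = n.factorial * exp |a| / (-b) ^ n * gigWeight l a b x := by
          rw [gigWeight, sub_eq_add_neg (-(a * x)), exp_add, neg_div]
  have hintegrable : IntegrableOn (fun x : ℝ ↦ x ^ (l - 1 - n)) (Ioo 0 1) := by
    refine ((h.mono_set Ioo_subset_Ioi_self).const_mul
      (n.factorial * exp |a| / (-b) ^ n)).mono' (by fun_prop) ?_
    filter_upwards [ae_restrict_mem measurableSet_Ioo] with x hx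
    rw [norm_of_nonneg (rpow_nonneg hx.1.le _)]
    exact hbound x hx
  linarith [(intervalIntegral.integrableOn_Ioo_rpow_iff one_pos).1 hintegrable]

lemma pos_or_of_integrableOn_gigWeight {l a b : ℝ} (h : IntegrableOn (gigWeight l a b) (Ioi 0)) :
    0 < b ∨ b = 0 ∧ 0 < l := by
  rcases lt_trichotomy b 0 with hb | rfl | hb
  · obtain ⟨n, hn⟩ := exists_nat_ge l
    have hpow : (-b) ^ n ≠ 0 := pow_ne_zero n (neg_ne_zero.2 hb.ne)
    exact absurd (natCast_lt_of_integrableOn_gigWeight hb.le hpow h) hn.not_gt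
  · have hl := natCast_lt_of_integrableOn_gigWeight (n := 0) le_rfl (by simp) h
    exact .inr ⟨rfl, by simpa using hl⟩
  · exact .inl hb

/- If `c = 0`, the first weight is integrable at zero only for `0 < l` and the second one at
infinity only for `l < 0`. -/
lemma pos_of_integrableOn_gigWeight {l a b c d : ℝ}
    (h₁ : IntegrableOn (gigWeight l a c) (Ioi 0))
    (h₂ : IntegrableOn (gigWeight l (c * d) b) (Ioi 0)) : 0 < c := by
  rcases pos_or_of_integrableOn_gigWeight h₁ with hc | ⟨rfl, hl⟩
  · exact hc
  · rcases pos_or_of_integrableOn_gigWeight (integrableOn_gigWeight_swap h₂) with hc | ⟨-, hl'⟩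
    · simp at hc
    · linarith

end GIG

section ProductMeasure

variable {X Y : Type*} [MeasurableSpace X] [MeasurableSpace Y] {μ : Measure X} {ν : Measure Y}

lemma map_withDensity_of_ae_involutive {T : X → X} {h : X → ENNReal}
    (hT : MeasurePreserving T μ μ) (hTT : ∀ᵐ x ∂μ, T (T x) = x) (hh : AEMeasurable h μ) :
    (μ.withDensity h).map T = μ.withDensity (h ∘ T) := by
  ext S hS
  have hTS := hT.restrict_preimage hS
  have hhT : AEMeasurable (h ∘ T) ((μ.restrict (T ⁻¹' S)).map T) := by
    rw [hTS.map_eq]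
    exact (hh.comp_quasiMeasurePreserving hT.quasiMeasurePreserving).restrict
  calc (μ.withDensity h).map T S = ∫⁻ x in T ⁻¹' S, h x ∂μ := by
        rw [Measure.map_apply hT.measurable hS, withDensity_apply _ (hT.measurable hS)]
    _ = ∫⁻ x in T ⁻¹' S, (h ∘ T) (T x) ∂μ := by
        refine lintegral_congr_ae (ae_restrict_of_ae ?_)
        filter_upwards [hTT] with x hx
        rw [Function.comp_apply, hx]
    _ = ∫⁻ x in S, (h ∘ T) x ∂μ := by rw [← lintegral_map' hhT hTS.aemeasurable, hTS.map_eq]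
    _ = μ.withDensity (h ∘ T) S := (withDensity_apply _ hS).symm

lemma indepFun_of_map_eq_prod {Ω : Type*} [MeasurableSpace Ω] {P : Measure Ω}
    [IsProbabilityMeasure P] {U : Ω → X} {V : Ω → Y} (hU : Measurable U) (hV : Measurable V)
    [SFinite ν] (h : P.map (fun ω ↦ (U ω, V ω)) = μ.prod ν) : IndepFun U V P := by
  have hUV : Measurable fun ω ↦ (U ω, V ω) := hU.prodMk hV
  have hμ : P.map U = ν univ • μ := by
    rw [← Measure.map_fst_prod, ← h, Measure.map_map measurable_fst hUV]
    rfl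
  have hν : P.map V = μ univ • ν := by
    rw [← Measure.map_snd_prod, ← h, Measure.map_map measurable_snd hUV]
    rfl
  have hone : μ univ * ν univ = 1 := by
    rw [← Measure.prod_prod, ← h, Measure.map_apply hUV (.prod .univ .univ), univ_prod_univ,
      preimage_univ, measure_univ]
  rw [indepFun_iff_map_prod_eq_prod_map_map hU.aemeasurable hV.aemeasurable, h, hμ, hν,
    Measure.prod_smul_left, Measure.prod_smul_right, smul_smul, mul_comm, hone, one_smul]

lemma exists_ae_eq_mul_of_withDensity_eq_prod [SigmaFinite μ] [SigmaFinite ν]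
    {H : X × Y → ENNReal} (hH : AEMeasurable H (μ.prod ν)) {μ' : Measure X} {ν' : Measure Y}
    [IsProbabilityMeasure μ'] [IsProbabilityMeasure ν']
    (h : (μ.prod ν).withDensity H = μ'.prod ν') :
    ∃ (φ : X → ENNReal) (ψ : Y → ENNReal), H =ᵐ[μ.prod ν] fun z ↦ φ z.1 * ψ z.2 := by
  have hac : μ'.prod ν' ≪ μ.prod ν := h ▸ withDensity_absolutelyContinuous _ H
  have hμ : μ' ≪ μ := by
    rw [← Measure.fst_prod (μ := μ') (ν := ν')]
    exact (hac.map measurable_fst).trans Measure.quasiMeasurePreserving_fst.absolutelyContinuous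
  have hν : ν' ≪ ν := by
    rw [← Measure.snd_prod (μ := μ') (ν := ν')]
    exact (hac.map measurable_snd).trans Measure.quasiMeasurePreserving_snd.absolutelyContinuous
  refine ⟨μ'.rnDeriv μ, ν'.rnDeriv ν, (withDensity_eq_iff_of_sigmaFinite hH (by fun_prop)).1 ?_⟩
  rw [h, ← prod_withDensity (by fun_prop) (by fun_prop), Measure.withDensity_rnDeriv_eq _ _ hμ,
    Measure.withDensity_rnDeriv_eq _ _ hν]

lemma quasiMeasurePreserving_prodMap {X' Y' : Type*} [MeasurableSpace X'] [MeasurableSpace Y']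
    {μ' : Measure X'} {ν' : Measure Y'} [SFinite μ] [SFinite ν] [SFinite ν'] {f : X → X'}
    {g : Y → Y'} (hf : Measure.QuasiMeasurePreserving f μ μ')
    (hg : Measure.QuasiMeasurePreserving g ν ν') :
    Measure.QuasiMeasurePreserving (Prod.map f g) (μ.prod ν) (μ'.prod ν') := by
  refine ⟨hf.measurable.prodMap hg.measurable, ?_⟩
  rw [← Measure.map_prod_map _ _ hf.measurable hg.measurable]
  exact hf.absolutelyContinuous.prod hg.absolutelyContinuous

/- Both sides are continuous in `(z, w)`, and almost everywhere they are the same product of four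
factors. -/
lemma mul_eq_mul_of_ae_eq_mul [TopologicalSpace X] [TopologicalSpace Y] [SFinite μ] [SFinite ν]
    [μ.IsOpenPosMeasure] [ν.IsOpenPosMeasure] {R : Type*} [CommSemigroup R] [TopologicalSpace R]
    [ContinuousMul R] [T2Space R] {s : Set X} {t : Set Y} (hs : IsOpen s) (ht : IsOpen t)
    {h : X × Y → R} (hh : ContinuousOn h (s ×ˢ t)) {φ : X → R} {ψ : Y → R}
    (hφψ : h =ᵐ[(μ.restrict s).prod (ν.restrict t)] fun z ↦ φ z.1 * ψ z.2) :
    ∀ z ∈ s ×ˢ t, ∀ w ∈ s ×ˢ t, h z * h w = h (z.1, w.2) * h (w.1, z.2) := by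
  let π := (μ.restrict s).prod (ν.restrict t)
  have hcross : Measure.QuasiMeasurePreserving (Prod.map Prod.fst Prod.snd) (π.prod π) π :=
    quasiMeasurePreserving_prodMap Measure.quasiMeasurePreserving_fst
      Measure.quasiMeasurePreserving_snd
  have hswap : Measure.QuasiMeasurePreserving Prod.swap (π.prod π) (π.prod π) :=
    (Measure.measurePreserving_swap).quasiMeasurePreserving
  have hae : ∀ᵐ p ∂π.prod π, h p.1 * h p.2 = h (p.1.1, p.2.2) * h (p.2.1, p.1.2) := by
    filter_upwards [Measure.quasiMeasurePreserving_fst.ae hφψ,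
      Measure.quasiMeasurePreserving_snd.ae hφψ, hcross.ae hφψ, (hcross.comp hswap).ae hφψ]
      with p h₁ h₂ h₃ h₄
    simp only [Prod.map, Function.comp_apply, Prod.swap] at h₃ h₄
    rw [h₁, h₂, h₃, h₄, mul_mul_mul_comm, mul_comm (ψ _), mul_mul_mul_comm]
  intro z hz w hw
  have hπ : π = (μ.prod ν).restrict (s ×ˢ t) := Measure.prod_restrict s t
  rw [hπ, Measure.prod_restrict] at hae
  refine Measure.eqOn_open_of_ae_eq hae ((hs.prod ht).prod (hs.prod ht)) ?_ ?_
    (show (z, w) ∈ (s ×ˢ t) ×ˢ (s ×ˢ t) from ⟨hz, hw⟩)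
  · exact (hh.comp continuousOn_fst fun p hp ↦ hp.1).mul
      (hh.comp continuousOn_snd fun p hp ↦ hp.2)
  · exact (hh.comp (by fun_prop) fun p hp ↦ ⟨hp.1.1, hp.2.2⟩).mul
      (hh.comp (by fun_prop) fun p hp ↦ ⟨hp.2.1, hp.1.2⟩)

end ProductMeasure

lemma det_continuousLinearMap_prod {R : Type*} [CommRing R] [TopologicalSpace R]
    (f g : R × R →L[R] R) : (f.prod g).det = f (1, 0) * g (0, 1) - f (0, 1) * g (1, 0) := by
  rw [ContinuousLinearMap.det, ← LinearMap.det_toMatrix (Module.Basis.finTwoProd R),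
    Matrix.det_fin_two]
  simp [LinearMap.toMatrix_apply]

lemma measurePreserving_restrict_of_bijOn {E : Type*} [NormedAddCommGroup E] [NormedSpace ℝ E]
    [FiniteDimensional ℝ E] [MeasurableSpace E] [BorelSpace E] {μ : Measure E}
    [μ.IsAddHaarMeasure] {s t : Set E} {f : E → E} {f' : E → E →L[ℝ] E} (hs : MeasurableSet s)
    (hf : Measurable f) (hst : BijOn f s t) (hf' : ∀ x ∈ s, HasFDerivWithinAt f (f' x) s x)
    (hdet : ∀ x ∈ s, |(f' x).det| = 1) : MeasurePreserving f (μ.restrict s) (μ.restrict t) := by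
  have hdensity : (μ.restrict s).withDensity (fun x ↦ ENNReal.ofReal |(f' x).det|)
      = μ.restrict s := by
    refine Eq.trans (withDensity_congr_ae ?_) withDensity_one
    filter_upwards [ae_restrict_mem hs] with x hx
    simp [hdet x hx]
  refine ⟨hf, ?_⟩
  rw [← hst.image_eq,
    ← map_withDensity_abs_det_fderiv_eq_addHaar μ hs.nullMeasurableSet hf' hst.injOn, hdensity]

/-- The open quadrant `(0, ∞)²`. -/
abbrev quadrant : Set (ℝ × ℝ) := Ioi 0 ×ˢ Ioi 0

/-- Lebesgue measure on `(0, ∞)`, as a measure on `ℝ`. -/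
noncomputable abbrev volumePos : Measure ℝ := volume.restrict (Ioi 0)

section Transformation

open Real

variable {α β : ℝ}

lemma mapsTo_F1 (hα : 0 ≤ α) (hβ : 0 ≤ β) : MapsTo (F1 α β) quadrant quadrant := by
  rintro ⟨x, y⟩ ⟨hx : 0 < x, hy : 0 < y⟩
  refine ⟨?_, ?_⟩ <;> simp only [F1, mem_Ioi] <;> positivity

lemma F1_fst_mul_F1_snd (hα : 0 ≤ α) (hβ : 0 ≤ β) {z : ℝ × ℝ} (hz : z ∈ quadrant) :
    (F1 α β z).1 * (F1 α β z).2 = z.1 * z.2 := by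
  obtain ⟨x, y⟩ := z
  obtain ⟨hx : 0 < x, hy : 0 < y⟩ := hz
  simp only [F1]
  field_simp

lemma leftInvOn_F1 (hα : 0 ≤ α) (hβ : 0 ≤ β) : LeftInvOn (F1 α β) (F1 α β) quadrant := by
  intro z hz
  have hmul := F1_fst_mul_F1_snd hα hβ hz
  obtain ⟨x, y⟩ := z
  obtain ⟨hx : 0 < x, hy : 0 < y⟩ := hz
  rw [F1, mul_assoc α, mul_assoc β, hmul]
  ext <;> simp only [F1] <;> field_simp

lemma bijOn_F1 (hα : 0 ≤ α) (hβ : 0 ≤ β) : BijOn (F1 α β) quadrant quadrant :=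
  InvOn.bijOn ⟨leftInvOn_F1 hα hβ, leftInvOn_F1 hα hβ⟩ (mapsTo_F1 hα hβ) (mapsTo_F1 hα hβ)

@[fun_prop]
lemma measurable_F1 (α β : ℝ) : Measurable (F1 α β) := by
  unfold F1
  fun_prop

lemma exists_hasFDerivAt_F1 (hα : 0 ≤ α) (hβ : 0 ≤ β) {z : ℝ × ℝ} (hz : z ∈ quadrant) :
    ∃ F' : ℝ × ℝ →L[ℝ] ℝ × ℝ, HasFDerivAt (F1 α β) F' z ∧ F'.det = -1 := by
  obtain ⟨x, y⟩ := z
  obtain ⟨hx : 0 < x, hy : 0 < y⟩ := hz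
  have hα_ne : 1 + α * x * y ≠ 0 := by positivity
  have hβ_ne : 1 + β * x * y ≠ 0 := by positivity
  have hfst : HasFDerivAt Prod.fst (.fst ℝ ℝ ℝ) (x, y) := hasFDerivAt_fst
  have hsnd : HasFDerivAt Prod.snd (.snd ℝ ℝ ℝ) (x, y) := hasFDerivAt_snd
  have hα_deriv := ((hfst.const_mul α).mul hsnd).const_add 1
  have hβ_deriv := ((hfst.const_mul β).mul hsnd).const_add 1
  have hF1_fst := (hsnd.mul hβ_deriv).mul
    ((hasDerivAt_inv hα_ne).comp_hasFDerivAt (x, y) hα_deriv)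
  have hF1_snd := (hfst.mul hα_deriv).mul
    ((hasDerivAt_inv hβ_ne).comp_hasFDerivAt (x, y) hβ_deriv)
  refine ⟨_, hF1_fst.prodMk hF1_snd, ?_⟩
  rw [det_continuousLinearMap_prod]
  simp only [Pi.mul_apply, Function.comp_apply, add_apply, smul_apply,
    ContinuousLinearMap.coe_fst', ContinuousLinearMap.coe_snd', smul_eq_mul]
  field_simp
  ring

lemma continuousOn_F1 (hα : 0 ≤ α) (hβ : 0 ≤ β) : ContinuousOn (F1 α β) quadrant := by
  intro z hz
  obtain ⟨F', hF', -⟩ := exists_hasFDerivAt_F1 hα hβ hz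
  exact hF'.continuousAt.continuousWithinAt

lemma F1_exp_exp (hα : 0 ≤ α) (hβ : 0 ≤ β) (r s : ℝ) :
    F1 α β (exp r, exp s) = (exp (s + logShift α β (r + s)), exp (r - logShift α β (r + s))) := by
  have hα_pos : 0 < 1 + α * exp (r + s) := by positivity
  have hβ_pos : 0 < 1 + β * exp (r + s) := by positivity
  rw [F1, logShift, exp_add s, exp_sub r, exp_sub, exp_log hα_pos, exp_log hβ_pos, exp_add r s,
    mul_assoc α, mul_assoc β, mul_div_assoc, div_div_eq_mul_div]

lemma measurePreserving_F1 (hα : 0 ≤ α) (hβ : 0 ≤ β) :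
    MeasurePreserving (F1 α β) (volumePos.prod volumePos) (volumePos.prod volumePos) := by
  choose! F' hF' hdet using fun z hz ↦ exists_hasFDerivAt_F1 (z := z) hα hβ hz
  rw [Measure.prod_restrict, ← Measure.volume_eq_prod]
  exact measurePreserving_restrict_of_bijOn (measurableSet_Ioi.prod measurableSet_Ioi)
    (measurable_F1 α β) (bijOn_F1 hα hβ) (fun z hz ↦ (hF' z hz).hasFDerivWithinAt)
    fun z hz ↦ by rw [hdet z hz, abs_neg, abs_one]

lemma ae_mem_quadrant : ∀ᵐ z ∂volumePos.prod volumePos, z ∈ quadrant := by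
  rw [Measure.prod_restrict]
  exact ae_restrict_mem (measurableSet_Ioi.prod measurableSet_Ioi)

lemma map_F1_prod_withDensity (hα : 0 ≤ α) (hβ : 0 ≤ β) {f g : ℝ → ENNReal}
    (hf : AEMeasurable f volumePos) (hg : AEMeasurable g volumePos) :
    ((volumePos.withDensity f).prod (volumePos.withDensity g)).map (F1 α β)
      = (volumePos.prod volumePos).withDensity fun z ↦ f (F1 α β z).1 * g (F1 α β z).2 := by
  rw [prod_withDensity₀ hf hg]
  refine map_withDensity_of_ae_involutive (measurePreserving_F1 hα hβ) ?_
    (hf.comp_fst.mul hg.comp_snd)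
  filter_upwards [ae_mem_quadrant] with z hz using leftInvOn_F1 hα hβ hz

end Transformation

section GIGMeasure

open Real

/-- The measure on `(0, ∞)` with density `gigWeight l a b`: an unnormalized, possibly infinite,
generalized inverse Gaussian distribution. -/
noncomputable def gigMeasure (l a b : ℝ) : Measure ℝ :=
  volumePos.withDensity fun x ↦ ENNReal.ofReal (gigWeight l a b x)

instance (l a b : ℝ) : SFinite (gigMeasure l a b) := by
  unfold gigMeasure
  infer_instance

lemma withDensity_gigPdf (l a b : ℝ) :
    volume.withDensity (fun x ↦ ENNReal.ofReal (gigPdf l a b x))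
      = ENNReal.ofReal (∫ t in Ioi 0, gigWeight l a b t)⁻¹ • gigMeasure l a b := by
  rw [gigMeasure, ← withDensity_smul _ (by fun_prop), ← withDensity_indicator measurableSet_Ioi]
  congr 1
  funext x
  by_cases hx : 0 < x
  · have hZ : 0 ≤ ∫ t in Ioi 0, gigWeight l a b t :=
      setIntegral_nonneg measurableSet_Ioi fun t ht ↦ (gigWeight_pos l a b ht).le
    rw [indicator_of_mem (mem_Ioi.2 hx), Pi.smul_apply, smul_eq_mul,
      ← ENNReal.ofReal_mul (inv_nonneg.2 hZ), inv_mul_eq_div, gigPdf, if_pos hx]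
    rfl
  · rw [indicator_of_notMem (notMem_Ioi.2 (not_lt.1 hx)), gigPdf, if_neg hx, ENNReal.ofReal_zero]

lemma eq_withDensity_gigPdf_of_eq_smul {μ : Measure ℝ} [IsProbabilityMeasure μ] {C : ENNReal}
    {l a b : ℝ} (h : μ = C • gigMeasure l a b) :
    IntegrableOn (gigWeight l a b) (Ioi 0) ∧
      μ = volume.withDensity fun x ↦ ENNReal.ofReal (gigPdf l a b x) := by
  have hmass : C * gigMeasure l a b univ = 1 := by
    rw [← smul_eq_mul, ← Measure.smul_apply, ← h, measure_univ]
  have hmass_eq : gigMeasure l a b univ = C⁻¹ :=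
    ENNReal.eq_inv_of_mul_eq_one_left (by rwa [mul_comm])
  have hC : C ≠ 0 := left_ne_zero_of_mul_eq_one hmass
  have hnonneg : 0 ≤ᵐ[volumePos] gigWeight l a b := by
    filter_upwards [ae_restrict_mem measurableSet_Ioi] with x hx using (gigWeight_pos l a b hx).le
  have hlintegral : ∫⁻ x in Ioi 0, ENNReal.ofReal (gigWeight l a b x) = C⁻¹ := by
    rw [← hmass_eq, gigMeasure, withDensity_apply _ .univ, Measure.restrict_univ]
  have hintegrable : IntegrableOn (gigWeight l a b) (Ioi 0) := by
    refine ⟨(measurable_gigWeight l a b).aestronglyMeasurable, ?_⟩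
    rw [hasFiniteIntegral_iff_ofReal hnonneg, hlintegral]
    exact ENNReal.inv_lt_top.2 (pos_iff_ne_zero.2 hC)
  have hintegral : ENNReal.ofReal (∫ x in Ioi 0, gigWeight l a b x) = C⁻¹ := by
    rw [ofReal_integral_eq_lintegral_ofReal hintegrable hnonneg, hlintegral]
  have hintegral_pos : 0 < ∫ x in Ioi 0, gigWeight l a b x := by
    rw [← ENNReal.ofReal_pos, hintegral, ← hmass_eq, pos_iff_ne_zero]
    exact right_ne_zero_of_mul_eq_one hmass
  refine ⟨hintegrable, ?_⟩
  rw [withDensity_gigPdf, ENNReal.ofReal_inv_of_pos hintegral_pos, hintegral, inv_inv, ← h]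

lemma withDensity_eq_smul_gigMeasure {f : ℝ → ℝ} {C l a b : ℝ}
    (h : ∀ x ∈ Ioi (0 : ℝ), f x = C * gigWeight l a b x) :
    volumePos.withDensity (fun x ↦ ENNReal.ofReal (f x))
      = ENNReal.ofReal C • gigMeasure l a b := by
  rw [gigMeasure, ← withDensity_smul _ (by fun_prop)]
  refine withDensity_congr_ae ?_
  filter_upwards [ae_restrict_mem measurableSet_Ioi] with x hx
  rw [h x hx, ENNReal.ofReal_mul' (gigWeight_pos l a b hx).le, Pi.smul_apply, smul_eq_mul]

variable {α β : ℝ}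

lemma gigWeight_F1 (hα : 0 ≤ α) (hβ : 0 ≤ β) (l c₁ c₂ : ℝ) {z : ℝ × ℝ} (hz : z ∈ quadrant) :
    gigWeight l (c₁ * α) c₂ (F1 α β z).1 * gigWeight l (c₂ * β) c₁ (F1 α β z).2
      = gigWeight l (c₂ * α) c₁ z.1 * gigWeight l (c₁ * β) c₂ z.2 := by
  have hmul := F1_fst_mul_F1_snd hα hβ hz
  obtain ⟨hF1_fst, hF1_snd⟩ := mapsTo_F1 hα hβ hz
  obtain ⟨x, y⟩ := z
  obtain ⟨hx : 0 < x, hy : 0 < y⟩ := hz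
  simp only [gigWeight]
  rw [mul_mul_mul_comm, ← mul_rpow (le_of_lt hF1_fst) (le_of_lt hF1_snd), hmul, ← exp_add,
    mul_mul_mul_comm (x ^ (l - 1)), ← mul_rpow hx.le hy.le, ← exp_add]
  congr 2
  simp only [F1]
  field_simp
  ring

lemma map_F1_prod_gigMeasure (hα : 0 ≤ α) (hβ : 0 ≤ β) (l c₁ c₂ : ℝ) :
    ((gigMeasure l (c₁ * α) c₂).prod (gigMeasure l (c₂ * β) c₁)).map (F1 α β)
      = (gigMeasure l (c₂ * α) c₁).prod (gigMeasure l (c₁ * β) c₂) := by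
  simp only [gigMeasure]
  rw [map_F1_prod_withDensity hα hβ (by fun_prop) (by fun_prop),
    prod_withDensity (by fun_prop) (by fun_prop)]
  refine withDensity_congr_ae ?_
  filter_upwards [ae_mem_quadrant] with z hz
  rw [← ENNReal.ofReal_mul (gigWeight_pos _ _ _ (mapsTo_F1 hα hβ hz).1).le,
    ← ENNReal.ofReal_mul (gigWeight_pos _ _ _ hz.1).le, gigWeight_F1 hα hβ l c₁ c₂ hz]

lemma exists_map_F1_prod_withDensity_gigPdf_eq (hα : 0 ≤ α) (hβ : 0 ≤ β) (l c₁ c₂ : ℝ) :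
    ∃ C : ENNReal,
      ((volume.withDensity fun x ↦ ENNReal.ofReal (gigPdf l (c₁ * α) c₂ x)).prod
        (volume.withDensity fun x ↦ ENNReal.ofReal (gigPdf l (c₂ * β) c₁ x))).map (F1 α β)
      = (C • gigMeasure l (c₂ * α) c₁).prod (gigMeasure l (c₁ * β) c₂) := by
  refine ⟨ENNReal.ofReal (∫ t in Ioi 0, gigWeight l (c₁ * α) c₂ t)⁻¹
    * ENNReal.ofReal (∫ t in Ioi 0, gigWeight l (c₂ * β) c₁ t)⁻¹, ?_⟩
  rw [withDensity_gigPdf, withDensity_gigPdf, Measure.prod_smul_left, Measure.prod_smul_right,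
    smul_smul, Measure.map_smul, map_F1_prod_gigMeasure hα hβ, ← Measure.prod_smul_left]

end GIGMeasure

section Necessity

open Real

variable {α β : ℝ} {f g : ℝ → ℝ}

lemma mul_eq_mul_of_map_F1_eq_prod (hα : 0 ≤ α) (hβ : 0 ≤ β)
    (hf : ContinuousOn f (Ioi 0)) (hf_nonneg : ∀ x ∈ Ioi (0 : ℝ), 0 ≤ f x)
    (hg : ContinuousOn g (Ioi 0)) (hg_nonneg : ∀ x ∈ Ioi (0 : ℝ), 0 ≤ g x)
    {μ ν : Measure ℝ} [IsProbabilityMeasure μ] [IsProbabilityMeasure ν]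
    (h : ((volumePos.withDensity fun x ↦ ENNReal.ofReal (f x)).prod
      (volumePos.withDensity fun x ↦ ENNReal.ofReal (g x))).map (F1 α β) = μ.prod ν)
    {k : ℝ × ℝ → ℝ} (hk : ∀ z, k z = f (F1 α β z).1 * g (F1 α β z).2) :
    ∀ z ∈ quadrant, ∀ w ∈ quadrant, k z * k w = k (z.1, w.2) * k (w.1, z.2) := by
  have hmaps := mapsTo_F1 hα hβ
  have hk_cont : ContinuousOn k quadrant := by
    rw [funext hk]
    exact (hf.comp (continuousOn_F1 hα hβ).fst fun z hz ↦ (hmaps hz).1).mul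
      (hg.comp (continuousOn_F1 hα hβ).snd fun z hz ↦ (hmaps hz).2)
  have hf_meas : AEMeasurable (fun x ↦ ENNReal.ofReal (f x)) volumePos :=
    (hf.aemeasurable measurableSet_Ioi).ennreal_ofReal
  have hg_meas : AEMeasurable (fun x ↦ ENNReal.ofReal (g x)) volumePos :=
    (hg.aemeasurable measurableSet_Ioi).ennreal_ofReal
  have hfg_meas : AEMeasurable
      (fun z ↦ ENNReal.ofReal (f (F1 α β z).1) * ENNReal.ofReal (g (F1 α β z).2))
      (volumePos.prod volumePos) :=
    (hf_meas.comp_fst.mul hg_meas.comp_snd).comp_quasiMeasurePreserving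
      (measurePreserving_F1 hα hβ).quasiMeasurePreserving
  rw [map_F1_prod_withDensity hα hβ hf_meas hg_meas] at h
  obtain ⟨φ, ψ, hφψ⟩ := exists_ae_eq_mul_of_withDensity_eq_prod hfg_meas h
  refine mul_eq_mul_of_ae_eq_mul (μ := volume) (ν := volume) isOpen_Ioi isOpen_Ioi hk_cont
    (φ := fun u ↦ (φ u).toReal) (ψ := fun v ↦ (ψ v).toReal) ?_
  filter_upwards [hφψ, ae_mem_quadrant] with z hz hz_mem
  have hf_nonneg_z := hf_nonneg _ (hmaps hz_mem).1
  rw [← ENNReal.toReal_mul, ← hz, ← ENNReal.ofReal_mul hf_nonneg_z, ← hk, ENNReal.toReal_ofReal]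
  exact hk z ▸ mul_nonneg hf_nonneg_z (hg_nonneg _ (hmaps hz_mem).2)

lemma exists_log_separated_of_map_F1_eq_prod (hα : 0 ≤ α) (hβ : 0 ≤ β)
    (hf : ContinuousOn f (Ioi 0)) (hf_pos : ∀ x ∈ Ioi (0 : ℝ), 0 < f x)
    (hg : ContinuousOn g (Ioi 0)) (hg_pos : ∀ x ∈ Ioi (0 : ℝ), 0 < g x)
    {μ ν : Measure ℝ} [IsProbabilityMeasure μ] [IsProbabilityMeasure ν]
    (h : ((volumePos.withDensity fun x ↦ ENNReal.ofReal (f x)).prod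
      (volumePos.withDensity fun x ↦ ENNReal.ofReal (g x))).map (F1 α β) = μ.prod ν) :
    ∃ φ ψ : ℝ → ℝ, ∀ r s, log (f (exp (s + logShift α β (r + s))))
      + log (g (exp (r - logShift α β (r + s)))) = φ r + ψ s := by
  let k (z : ℝ × ℝ) : ℝ := f (F1 α β z).1 * g (F1 α β z).2
  have hk_ne (u v : ℝ) (hu : 0 < u) (hv : 0 < v) : k (u, v) ≠ 0 := by
    obtain ⟨hfst, hsnd⟩ := mapsTo_F1 hα hβ (show (u, v) ∈ quadrant from ⟨hu, hv⟩)
    exact (mul_pos (hf_pos _ hfst) (hg_pos _ hsnd)).ne'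
  have hk_cross (u v : ℝ) (hu : 0 < u) (hv : 0 < v) :
      k (u, v) * k (1, 1) = k (u, 1) * k (1, v) :=
    mul_eq_mul_of_map_F1_eq_prod hα hβ hf (fun x hx ↦ (hf_pos x hx).le) hg
      (fun x hx ↦ (hg_pos x hx).le) h (fun _ ↦ rfl) (u, v) ⟨hu, hv⟩ (1, 1)
      ⟨zero_lt_one' ℝ, zero_lt_one' ℝ⟩
  refine ⟨fun r ↦ log (k (exp r, 1)), fun s ↦ log (k (1, exp s)) - log (k (1, 1)),
    fun r s ↦ ?_⟩
  have hr := exp_pos r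
  have hs := exp_pos s
  have hlog_cross := congrArg log (hk_cross _ _ hr hs)
  rw [log_mul (hk_ne _ _ hr hs) (hk_ne _ _ one_pos one_pos),
    log_mul (hk_ne _ _ hr one_pos) (hk_ne _ _ one_pos hs)] at hlog_cross
  have hlog_k : log (k (exp r, exp s)) = log (f (exp (s + logShift α β (r + s))))
      + log (g (exp (r - logShift α β (r + s)))) := by
    simp only [k, F1_exp_exp hα hβ]
    exact log_mul (hf_pos _ (exp_pos _)).ne' (hg_pos _ (exp_pos _)).ne'
  linarith

theorem exists_gig_of_map_F1_eq_prod (hα : 0 ≤ α) (hβ : 0 ≤ β) (hαβ : α ≠ β)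
    (hf_pos : ∀ x ∈ Ioi (0 : ℝ), 0 < f x) (hg_pos : ∀ x ∈ Ioi (0 : ℝ), 0 < g x)
    (hf : ∀ x ∈ Ioi (0 : ℝ), DifferentiableAt ℝ f x ∧ DifferentiableAt ℝ (deriv f) x)
    (hg : ∀ x ∈ Ioi (0 : ℝ), DifferentiableAt ℝ g x ∧ DifferentiableAt ℝ (deriv g) x)
    {ρ σ μ ν : Measure ℝ} [IsProbabilityMeasure ρ] [IsProbabilityMeasure σ]
    [IsProbabilityMeasure μ] [IsProbabilityMeasure ν]
    (hρ : ρ = volumePos.withDensity fun x ↦ ENNReal.ofReal (f x))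
    (hσ : σ = volumePos.withDensity fun x ↦ ENNReal.ofReal (g x))
    (h : (ρ.prod σ).map (F1 α β) = μ.prod ν) :
    ∃ l c₁ c₂ : ℝ, 0 < c₁ ∧ 0 < c₂ ∧
      ρ = volume.withDensity (fun x ↦ ENNReal.ofReal (gigPdf l (c₁ * α) c₂ x)) ∧
      σ = volume.withDensity (fun x ↦ ENNReal.ofReal (gigPdf l (c₂ * β) c₁ x)) := by
  rw [hρ, hσ] at h
  obtain ⟨φ, ψ, hφψ⟩ := exists_log_separated_of_map_F1_eq_prod hα hβ
    (fun x hx ↦ (hf x hx).1.continuousAt.continuousWithinAt) hf_pos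
    (fun x hx ↦ (hg x hx).1.continuousAt.continuousWithinAt) hg_pos h
  have hf_log := differentiable_log_comp_exp hf_pos fun x hx ↦ (hf x hx).1
  have hg_log := differentiable_log_comp_exp hg_pos fun x hx ↦ (hg x hx).1
  have hf_log' := differentiable_deriv_log_comp_exp hf_pos (fun x hx ↦ (hf x hx).1)
    fun x hx ↦ (hf x hx).2
  have hg_log' := differentiable_deriv_log_comp_exp hg_pos (fun x hx ↦ (hg x hx).1)
    fun x hx ↦ (hg x hx).2
  obtain ⟨k, c₁, c₂, hf_deriv, hg_deriv⟩ :=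
    (mixedDerivEquation_of_separated hα hβ hαβ hf_log hf_log' hg_log hg_log' hφψ).exists_solution
      hαβ hf_log' hg_log'
  obtain ⟨C, hC⟩ := exists_eq_mul_gigWeight hf_pos hf_log hf_deriv
  obtain ⟨D, hD⟩ := exists_eq_mul_gigWeight hg_pos hg_log hg_deriv
  obtain ⟨hf_int, hρ_gig⟩ :=
    eq_withDensity_gigPdf_of_eq_smul (hρ.trans (withDensity_eq_smul_gigMeasure hC))
  obtain ⟨hg_int, hσ_gig⟩ :=
    eq_withDensity_gigPdf_of_eq_smul (hσ.trans (withDensity_eq_smul_gigMeasure hD))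
  exact ⟨k + 1, c₁, c₂, pos_of_integrableOn_gigWeight hg_int hf_int,
    pos_of_integrableOn_gigWeight hf_int hg_int, hρ_gig, hσ_gig⟩

end Necessity

lemma map_eq_withDensity_volumePos {Ω : Type*} [MeasurableSpace Ω] {P : Measure Ω} {X : Ω → ℝ}
    (hX : Measurable X) (hX_pos : ∀ ω, 0 < X ω) {f : ℝ → ENNReal}
    (h : P.map X = volume.withDensity f) : P.map X = volumePos.withDensity f := by
  have hae : ∀ᵐ x ∂P.map X, x ∈ Ioi 0 :=
    (ae_map_iff hX.aemeasurable measurableSet_Ioi).2 (.of_forall hX_pos)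
  rw [← restrict_withDensity measurableSet_Ioi, ← h, Measure.restrict_eq_self_of_ae_mem hae]

theorem gig_characterization
    {Ω : Type*} [MeasureSpace Ω] [IsProbabilityMeasure (ℙ : Measure Ω)]
    (α β : ℝ) (hα : 0 ≤ α) (hβ : 0 ≤ β) (hαβ : α ≠ β)
    (X Y : Ω → ℝ) (hXm : Measurable X) (hYm : Measurable Y)
    (hXpos : ∀ ω, 0 < X ω) (hYpos : ∀ ω, 0 < Y ω)
    (hIndep : IndepFun X Y ℙ)
    (fX fY : ℝ → ℝ)
    (hfX : Measure.map X ℙ = volume.withDensity (fun x => ENNReal.ofReal (fX x)))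
    (hfY : Measure.map Y ℙ = volume.withDensity (fun x => ENNReal.ofReal (fY x)))
    (hfXpos : ∀ x ∈ Ioi (0 : ℝ), 0 < fX x)
    (hfYpos : ∀ x ∈ Ioi (0 : ℝ), 0 < fY x)
    (hfXdiff : ∀ x ∈ Ioi (0 : ℝ),
      DifferentiableAt ℝ fX x ∧ DifferentiableAt ℝ (deriv fX) x)
    (hfYdiff : ∀ x ∈ Ioi (0 : ℝ),
      DifferentiableAt ℝ fY x ∧ DifferentiableAt ℝ (deriv fY) x) :
    IndepFun (fun ω => (F1 α β (X ω, Y ω)).1) (fun ω => (F1 α β (X ω, Y ω)).2) ℙ ↔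
      ∃ (l c1 c2 : ℝ), 0 < c1 ∧ 0 < c2 ∧
        Measure.map X ℙ =
          volume.withDensity (fun x => ENNReal.ofReal (gigPdf l (c1 * α) c2 x)) ∧
        Measure.map Y ℙ =
          volume.withDensity (fun x => ENNReal.ofReal (gigPdf l (c2 * β) c1 x)) := by
  have hXY := hXm.prodMk hYm
  have hF1 := measurable_F1 α β
  have hU : Measurable fun ω ↦ (F1 α β (X ω, Y ω)).1 := (hF1.comp hXY).fst
  have hV : Measurable fun ω ↦ (F1 α β (X ω, Y ω)).2 := (hF1.comp hXY).snd
  have := Measure.isProbabilityMeasure_map (μ := ℙ) hXm.aemeasurable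
  have := Measure.isProbabilityMeasure_map (μ := ℙ) hYm.aemeasurable
  have := Measure.isProbabilityMeasure_map (μ := ℙ) hU.aemeasurable
  have := Measure.isProbabilityMeasure_map (μ := ℙ) hV.aemeasurable
  have hlaw : Measure.map (fun ω ↦ F1 α β (X ω, Y ω)) ℙ
      = ((Measure.map X ℙ).prod (Measure.map Y ℙ)).map (F1 α β) := by
    rw [← (indepFun_iff_map_prod_eq_prod_map_map hXm.aemeasurable hYm.aemeasurable).1 hIndep,
      Measure.map_map hF1 hXY]
    rfl
  constructor
  · intro h
    exact exists_gig_of_map_F1_eq_prod hα hβ hαβ hfXpos hfYpos hfXdiff hfYdiff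
      (map_eq_withDensity_volumePos hXm hXpos hfX) (map_eq_withDensity_volumePos hYm hYpos hfY)
      (hlaw.symm.trans
        ((indepFun_iff_map_prod_eq_prod_map_map hU.aemeasurable hV.aemeasurable).1 h))
  · rintro ⟨l, c1, c2, -, -, hX, hY⟩
    obtain ⟨C, hC⟩ := exists_map_F1_prod_withDensity_gigPdf_eq hα hβ l c1 c2
    rw [← hX, ← hY] at hC
    exact indepFun_of_map_eq_prod hU hV (hlaw.trans hC)
end

section
/- Let F₂(x,y) = (min{x,0} − y, min{x,y,0} − x − y). If X and Y are independent ℝ-valued random variables with X ~ AL(p,q) and Y ~ AL(p+q, r) for some p, q, r > 0, then (U,V) := F₂(X,Y) are independent, with U ~ AL(r,q) and V ~ AL(q+r, p). -/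
open MeasureTheory ProbabilityTheory Set

/-- Density of the asymmetric Laplace distribution AL(l1, l2):
`(1/Z)(e^{-l1 x} 1_{[0,∞)}(x) + e^{l2 x} 1_{(-∞,0)}(x))` with `Z = 1/l1 + 1/l2`. -/
noncomputable def alPdf (l1 l2 : ℝ) : ℝ → ℝ := fun x =>
  (l1 * l2 / (l1 + l2)) *
    (if 0 ≤ x then Real.exp (-(l1 * x)) else Real.exp (l2 * x))

/-- The transformation F₂. -/
noncomputable def F2 : ℝ × ℝ → ℝ × ℝ := fun p =>
  (min p.1 0 - p.2, min (min p.1 p.2) 0 - p.1 - p.2)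

/-!
Write `R (x, y) = (x, min x 0 - y)`, a Lebesgue-preserving involution. Then `F2 = R ∘ swap ∘ R`,
so `(X, U) = R (X, Y)`, and `R` takes `(U, X)` to `(U, V)`. In the coordinates `(x, u)` the joint
density of `AL(p, q)` and `AL(p + q, r)` becomes proportional to
`exp (-(p (x + u⁻)⁺ + q max x⁻ u⁻ + r (u + x⁻)⁺))`, which is invariant under exchanging
`(x, p)` with `(u, r)`. Hence conjugating the swap by `R` exchanges `p` and `r` in the product law.
-/

section MeasurePreserving

variable {α β Ω : Type*} [MeasurableSpace α] [MeasurableSpace β] [MeasurableSpace Ω]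

theorem measurePreserving_withDensity_comp {μ : Measure α} {ν : Measure β} {f : α → β}
    (hf : MeasurePreserving f μ ν) {g : β → ENNReal} (hg : Measurable g) :
    MeasurePreserving f (μ.withDensity (g ∘ f)) (ν.withDensity g) := by
  refine ⟨hf.measurable, Measure.ext fun s hs => ?_⟩
  rw [Measure.map_apply hf.measurable hs, withDensity_apply _ (hf.measurable hs),
    withDensity_apply _ hs, ← hf.setLIntegral_comp_preimage hs hg]
  simp only [Function.comp_apply]

theorem measurePreserving_symm_of_involutive {μ ν : Measure α} {f : α → α}
    (hf : MeasurePreserving f μ ν) (hinv : Function.Involutive f) : MeasurePreserving f ν μ :=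
  ⟨hf.measurable, by
    rw [← hf.map_eq, Measure.map_map hf.measurable hf.measurable, hinv.comp_self, Measure.map_id]⟩

theorem indepFun_and_hasLaw_of_hasLaw_prod {P : Measure Ω} {μ : Measure α} {ν : Measure β}
    [IsProbabilityMeasure μ] [IsProbabilityMeasure ν] {U : Ω → α} {V : Ω → β}
    (h : HasLaw (fun ω => (U ω, V ω)) (μ.prod ν) P) :
    IndepFun U V P ∧ HasLaw U μ P ∧ HasLaw V ν P := by
  have hU : HasLaw U μ P := measurePreserving_fst.fun_comp_hasLaw h
  have hV : HasLaw V ν P := measurePreserving_snd.fun_comp_hasLaw h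
  have : IsProbabilityMeasure P := h.isProbabilityMeasure
  refine ⟨?_, hU, hV⟩
  rw [indepFun_iff_map_prod_eq_prod_map_map hU.aemeasurable hV.aemeasurable, h.map_eq, hU.map_eq,
    hV.map_eq]

end MeasurePreserving

section FiberReflection

variable {α G : Type*} [AddCommGroup G]

/-- The involution of `α × G` that reflects the fiber over `x` through `y ↦ g x - y`. With
`g x = min x 0` it is the building block of `F2`. -/
def fiberReflection (g : α → G) (z : α × G) : α × G :=
  (z.1, g z.1 - z.2)

theorem involutive_fiberReflection (g : α → G) : Function.Involutive (fiberReflection g) :=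
  fun z => by simp [fiberReflection]

theorem measurePreserving_fiberReflection [MeasurableSpace α] [MeasurableSpace G]
    [MeasurableAdd₂ G] [MeasurableNeg G] {μ : Measure α} {ν : Measure G} [SFinite μ] [SFinite ν]
    [ν.IsNegInvariant] [ν.IsAddLeftInvariant] {g : α → G} (hg : Measurable g) :
    MeasurePreserving (fiberReflection g) (μ.prod ν) (μ.prod ν) :=
  (MeasurePreserving.id μ).skew_product (g := fun x y => g x - y)
    ((hg.comp measurable_fst).sub measurable_snd)
    (.of_forall fun x => Measure.map_sub_left_eq_self ν (g x))

end FiberReflection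

theorem F2_eq_fiberReflection_comp_swap_comp_fiberReflection :
    F2 = fiberReflection (min · 0) ∘ Prod.swap ∘ fiberReflection (min · 0) := by
  funext ⟨x, y⟩
  simp only [F2, fiberReflection, Function.comp_apply, Prod.swap_prod_mk, Prod.mk.injEq, true_and]
  grind

/-- The asymmetric Laplace distribution `AL(a, b)`, as the measure with density `alPdf a b`. -/
noncomputable def alMeasure (a b : ℝ) : Measure ℝ :=
  volume.withDensity fun x => ENNReal.ofReal (alPdf a b x)

theorem alPdf_eq_exp_posPart_negPart (a b x : ℝ) :
    alPdf a b x = a * b / (a + b) * Real.exp (-(a * x⁺ + b * x⁻)) := by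
  rcases le_or_gt 0 x with hx | hx
  · simp [alPdf, hx]
  · simp [alPdf, hx.not_ge, hx.le]

theorem alPdf_nonneg {a b : ℝ} (ha : 0 ≤ a) (hb : 0 ≤ b) (x : ℝ) : 0 ≤ alPdf a b x := by
  rw [alPdf_eq_exp_posPart_negPart]
  positivity

@[fun_prop]
theorem measurable_alPdf (a b : ℝ) : Measurable (alPdf a b) :=
  (Measurable.ite measurableSet_Ici (by fun_prop) (by fun_prop)).const_mul _

theorem ofReal_alPdf_ae_eq_exponentialPDF {a b : ℝ} (ha : 0 < a) (hb : 0 < b) :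
    (fun x => ENNReal.ofReal (alPdf a b x)) =ᵐ[volume]
      ENNReal.ofReal (b / (a + b)) • exponentialPDF a +
        ENNReal.ofReal (a / (a + b)) • (exponentialPDF b ∘ Neg.neg) := by
  filter_upwards [Measure.ae_ne volume 0] with x hx
  simp only [Pi.add_apply, Pi.smul_apply, Function.comp_apply, smul_eq_mul]
  rcases hx.lt_or_gt with hneg | hpos
  · rw [exponentialPDF_of_neg hneg, exponentialPDF_of_nonneg (neg_nonneg.2 hneg.le), mul_zero,
      zero_add, ← ENNReal.ofReal_mul (by positivity), alPdf, if_neg hneg.not_ge]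
    ring_nf
  · rw [exponentialPDF_of_nonneg hpos.le, exponentialPDF_of_neg (neg_neg_iff_pos.2 hpos), mul_zero,
      add_zero, ← ENNReal.ofReal_mul (by positivity), alPdf, if_pos hpos.le]
    ring_nf

theorem alMeasure_eq_add_expMeasure {a b : ℝ} (ha : 0 < a) (hb : 0 < b) :
    alMeasure a b = ENNReal.ofReal (b / (a + b)) • expMeasure a +
      ENNReal.ofReal (a / (a + b)) • (expMeasure b).map Neg.neg := by
  have hmeas (c : ℝ) : Measurable (exponentialPDF c) :=
    (measurable_exponentialPDFReal c).ennreal_ofReal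
  have hneg : (expMeasure b).map Neg.neg = volume.withDensity (exponentialPDF b ∘ Neg.neg) :=
    (measurePreserving_symm_of_involutive
      (measurePreserving_withDensity_comp (Measure.measurePreserving_neg volume) (hmeas b))
      neg_involutive).map_eq
  rw [hneg, alMeasure, withDensity_congr_ae (ofReal_alPdf_ae_eq_exponentialPDF ha hb),
    withDensity_add_left ((hmeas a).const_smul _), withDensity_smul _ (hmeas a),
    withDensity_smul _ ((hmeas b).comp measurable_neg)]
  rfl

theorem isProbabilityMeasure_alMeasure {a b : ℝ} (ha : 0 < a) (hb : 0 < b) :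
    IsProbabilityMeasure (alMeasure a b) := by
  have := isProbabilityMeasure_expMeasure ha
  have := isProbabilityMeasure_expMeasure hb
  have := Measure.isProbabilityMeasure_map (μ := expMeasure b) measurable_neg.aemeasurable
  refine ⟨?_⟩
  rw [alMeasure_eq_add_expMeasure ha hb]
  simp only [Measure.add_apply, Measure.smul_apply, measure_univ, smul_eq_mul, mul_one]
  rw [← ENNReal.ofReal_add (by positivity) (by positivity), ← add_div, add_comm b,
    div_self (by positivity), ENNReal.ofReal_one]

/-- The joint density of `(X, U)`, where `X ~ AL(p, q)` and `Y ~ AL(p + q, r)` are independent and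
`U = min X 0 - Y` is the first component of `F2 (X, Y)`. -/
noncomputable def exchangePdf (p q r : ℝ) (z : ℝ × ℝ) : ℝ :=
  p * q * r / (p + q + r) *
    Real.exp (-(p * (z.1 + z.2⁻)⁺ + q * max z.1⁻ z.2⁻ + r * (z.2 + z.1⁻)⁺))

/-- The joint law of `(X, U)`, with density `exchangePdf p q r`. -/
noncomputable def exchangeMeasure (p q r : ℝ) : Measure (ℝ × ℝ) :=
  (volume.prod volume).withDensity fun z => ENNReal.ofReal (exchangePdf p q r z)

@[fun_prop]
theorem measurable_exchangePdf (p q r : ℝ) : Measurable (exchangePdf p q r) := by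
  unfold exchangePdf
  simp only [posPart_def, negPart_def]
  fun_prop

theorem exchangePdf_swap (p q r : ℝ) (z : ℝ × ℝ) :
    exchangePdf p q r z.swap = exchangePdf r q p z := by
  simp only [exchangePdf, Prod.fst_swap, Prod.snd_swap, max_comm z.2⁻]
  ring_nf

theorem measurePreserving_swap_exchangeMeasure (p q r : ℝ) :
    MeasurePreserving Prod.swap (exchangeMeasure p q r) (exchangeMeasure r q p) := by
  have hpdf : (fun z => ENNReal.ofReal (exchangePdf p q r z)) =
      (fun z => ENNReal.ofReal (exchangePdf r q p z)) ∘ Prod.swap :=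
    funext fun z => congrArg ENNReal.ofReal (exchangePdf_swap r q p z).symm
  rw [exchangeMeasure, hpdf]
  exact measurePreserving_withDensity_comp Measure.measurePreserving_swap (by fun_prop)

theorem alPdf_mul_alPdf_eq_exchangePdf {p q : ℝ} (hpq : p + q ≠ 0) (r : ℝ) (z : ℝ × ℝ) :
    alPdf p q z.1 * alPdf (p + q) r z.2 =
      exchangePdf p q r (fiberReflection (min · 0) z) := by
  obtain ⟨x, y⟩ := z
  set u := min x 0 - y with hu
  have hcoeff_p : x⁺ + y⁺ = (x + u⁻)⁺ := by grind [posPart_def, negPart_def]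
  have hcoeff_q : x⁻ + y⁺ = max x⁻ u⁻ := by grind [posPart_def, negPart_def]
  have hcoeff_r : y⁻ = (u + x⁻)⁺ := by grind [posPart_def, negPart_def]
  have hconst : p * q / (p + q) * ((p + q) * r / (p + q + r)) = p * q * r / (p + q + r) := by
    field_simp
  simp only [alPdf_eq_exp_posPart_negPart, exchangePdf, fiberReflection, ← hu, ← hcoeff_p,
    ← hcoeff_q, ← hcoeff_r, ← hconst]
  rw [mul_mul_mul_comm, ← Real.exp_add]
  ring_nf

theorem measurePreserving_fiberReflection_alMeasure_prod {p q : ℝ} (hp : 0 < p) (hq : 0 < q)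
    (r : ℝ) :
    MeasurePreserving (fiberReflection (min · 0)) ((alMeasure p q).prod (alMeasure (p + q) r))
      (exchangeMeasure p q r) := by
  have hpdf : (fun z : ℝ × ℝ =>
        ENNReal.ofReal (alPdf p q z.1) * ENNReal.ofReal (alPdf (p + q) r z.2)) =
      (fun z => ENNReal.ofReal (exchangePdf p q r z)) ∘ fiberReflection (min · 0) := by
    funext z
    rw [← ENNReal.ofReal_mul (alPdf_nonneg hp.le hq.le _),
      alPdf_mul_alPdf_eq_exchangePdf (add_pos hp hq).ne', Function.comp_apply]
  rw [alMeasure, alMeasure, prod_withDensity (by fun_prop) (by fun_prop), hpdf]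
  exact measurePreserving_withDensity_comp (measurePreserving_fiberReflection (by fun_prop))
    (by fun_prop)

theorem measurePreserving_F2_alMeasure_prod {p q r : ℝ} (hp : 0 < p) (hq : 0 < q) (hr : 0 < r) :
    MeasurePreserving F2 ((alMeasure p q).prod (alMeasure (p + q) r))
      ((alMeasure r q).prod (alMeasure (q + r) p)) := by
  have hXU := measurePreserving_fiberReflection_alMeasure_prod hp hq r
  have hUX := measurePreserving_swap_exchangeMeasure p q r
  have hUV := measurePreserving_symm_of_involutive
    (measurePreserving_fiberReflection_alMeasure_prod hr hq p) (involutive_fiberReflection _)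
  rw [F2_eq_fiberReflection_comp_swap_comp_fiberReflection, add_comm q r]
  exact hUV.comp (hUX.comp hXU)

theorem al_if_part
    {Ω : Type*} [MeasureSpace Ω] [IsProbabilityMeasure (ℙ : Measure Ω)]
    (X Y : Ω → ℝ) (hXm : Measurable X) (hYm : Measurable Y)
    (hIndep : IndepFun X Y ℙ)
    (p q r : ℝ) (hp : 0 < p) (hq : 0 < q) (hr : 0 < r)
    (hX : Measure.map X ℙ = volume.withDensity (fun x => ENNReal.ofReal (alPdf p q x)))
    (hY : Measure.map Y ℙ =
      volume.withDensity (fun x => ENNReal.ofReal (alPdf (p + q) r x))) :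
    IndepFun (fun ω => (F2 (X ω, Y ω)).1) (fun ω => (F2 (X ω, Y ω)).2) ℙ ∧
      Measure.map (fun ω => (F2 (X ω, Y ω)).1) ℙ =
        volume.withDensity (fun x => ENNReal.ofReal (alPdf r q x)) ∧
      Measure.map (fun ω => (F2 (X ω, Y ω)).2) ℙ =
        volume.withDensity (fun x => ENNReal.ofReal (alPdf (q + r) p x)) := by
  have hXY : HasLaw (fun ω => (X ω, Y ω)) ((alMeasure p q).prod (alMeasure (p + q) r)) ℙ :=
    ⟨(hXm.prodMk hYm).aemeasurable, by
      rw [hIndep.map_prod_eq_prod_map_map hXm.aemeasurable hYm.aemeasurable, hX, hY, alMeasure,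
        alMeasure]⟩
  have hUV : HasLaw (fun ω => F2 (X ω, Y ω)) ((alMeasure r q).prod (alMeasure (q + r) p)) ℙ :=
    (measurePreserving_F2_alMeasure_prod hp hq hr).fun_comp_hasLaw hXY
  have := isProbabilityMeasure_alMeasure hr hq
  have := isProbabilityMeasure_alMeasure (add_pos hq hr) hp
  obtain ⟨hindep, hU, hV⟩ := indepFun_and_hasLaw_of_hasLaw_prod hUV
  exact ⟨hindep, hU.map_eq, hV.map_eq⟩
end

section
/- Let c₁, c₂ > 0 and let F₃(x,y) = (min{−x,y}, y + x − min{−x,y}). Let X and Y be ℝ-valued independent random variables with densities f_X and f_Y satisfying: f_X(x) > 0 for x ∈ [−c₁, c₂] and f_X(x) = 0 otherwise; f_Y(y) > 0 for y ∈ [−c₂, ∞) and f_Y(y) = 0 otherwise; and both densities are twice-differentiable in the interior of their supports. Set (U,V) := F₃(X,Y). Then U and V are independent if and only if there exists λ > 0 such that X ~ stExp(λ, −c₁, c₂) and Y ~ sExp(λ, −c₂). -/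
open MeasureTheory ProbabilityTheory Set

/-- Density of the shifted exponential distribution sExp(l, c):
`(1/Z) e^{-l x} 1_{[c,∞)}(x)` with `Z = (1/l) e^{-l c}`. -/
noncomputable def sExpPdf (l c : ℝ) : ℝ → ℝ := fun x =>
  if c ≤ x then Real.exp (-(l * x)) / ((1 / l) * Real.exp (-(l * c))) else 0

/-- Density of the shifted truncated exponential distribution stExp(l, c1, c2):
`(1/Z) e^{-l x} 1_{[c1,c2]}(x)` with `Z = (1/l)(e^{-l c1} - e^{-l c2})`. -/
noncomputable def stExpPdf (l c1 c2 : ℝ) : ℝ → ℝ := fun x =>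
  if c1 ≤ x ∧ x ≤ c2 then
    Real.exp (-(l * x)) / ((1 / l) * (Real.exp (-(l * c1)) - Real.exp (-(l * c2))))
  else 0

/-- The transformation F₃. -/
noncomputable def F3 : ℝ × ℝ → ℝ × ℝ := fun p =>
  (min (-p.1) p.2, p.2 + p.1 - min (-p.1) p.2)

/-!
`F3` preserves `x + y` and Lebesgue measure, so it carries the product of the two exponential
densities to another product of the same kind; this is the easy direction.

For the converse, let `(U, V) = F3 (X, Y)` have independent coordinates and let `[a, b]` be the
support of `X`. For `v ≥ b` the event `V > v` forces `U = -X` and reads `Y > v - 2 X`, so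
independence says that `P(Y > v - 2 x)` is a function of `x ∈ [a, b]` times a function of `v`.
Comparing `v = b + t` with `v = b` gives
`P(Y > -b + t + s) = P(Y > -b + t) P(Y > -b + s)` for `t ≥ 0` and `0 ≤ s ≤ 2 (b - a)`, and already
this local memorylessness makes `Y` exponential. For `r ≤ s` the event `U ≤ -s, V ≤ r` is
`X ≤ r, Y ≤ -s`, while `U > -s` is `X < s, Y > -s`; eliminating the laws of `U` and `V` leaves an
equation for the distribution function of `X`, whose limit as `r → a` gives that function
explicitly.
-/

open Filter Topology

/-- The shifted exponential distribution `sExp(l, c)`, as a measure. -/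
noncomputable def sExpMeasure (l c : ℝ) : Measure ℝ :=
  volume.withDensity fun x => ENNReal.ofReal (sExpPdf l c x)

/-- The shifted truncated exponential distribution `stExp(l, c₁, c₂)`, as a measure. -/
noncomputable def stExpMeasure (l c₁ c₂ : ℝ) : Measure ℝ :=
  volume.withDensity fun x => ENNReal.ofReal (stExpPdf l c₁ c₂ x)

lemma map_withDensity_comp {α β : Type*} [MeasurableSpace α] [MeasurableSpace β]
    {μ : Measure α} {ν : Measure β} {f : α → β} (hf : MeasurePreserving f μ ν)
    {g : β → ENNReal} (hg : Measurable g) :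
    (μ.withDensity (g ∘ f)).map f = ν.withDensity g := by
  ext s hs
  rw [Measure.map_apply hf.measurable hs, withDensity_apply _ (hf.measurable hs),
    withDensity_apply _ hs]
  exact hf.setLIntegral_comp_preimage hs hg

section Exponential

variable {l c c₁ c₂ : ℝ}

lemma measurable_sExpPdf : Measurable (sExpPdf l c) :=
  Measurable.ite measurableSet_Ici (by fun_prop) measurable_const

lemma measurable_stExpPdf : Measurable (stExpPdf l c₁ c₂) :=
  Measurable.ite measurableSet_Icc (by fun_prop) measurable_const

lemma stExpPdf_nonneg (hl : 0 ≤ l) (x : ℝ) : 0 ≤ stExpPdf l c₁ c₂ x := by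
  unfold stExpPdf
  split_ifs with hx
  · have : Real.exp (-(l * c₂)) ≤ Real.exp (-(l * c₁)) := by
      gcongr
      exact hx.1.trans hx.2
    have := sub_nonneg.2 this
    positivity
  · rfl

lemma sExpPdf_eq_ite (x : ℝ) :
    sExpPdf l c x = if c ≤ x then l * Real.exp (-(l * (x - c))) else 0 := by
  rw [sExpPdf, div_mul_eq_div_div_swap, ← Real.exp_sub, div_div_eq_mul_div, div_one, mul_comm]
  ring_nf

lemma stExpPdf_eq_indicator (hl : l ≠ 0) (x : ℝ) :
    stExpPdf l c₁ c₂ x =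
      (Iic c₂).indicator (fun x => (1 - Real.exp (-(l * (c₂ - c₁))))⁻¹ * sExpPdf l c₁ x) x := by
  have hmass : Real.exp (-(l * c₁)) - Real.exp (-(l * c₂)) =
      Real.exp (-(l * c₁)) * (1 - Real.exp (-(l * (c₂ - c₁)))) := by
    rw [mul_sub, ← Real.exp_add]
    ring_nf
  simp only [stExpPdf, sExpPdf, indicator_apply, mem_Iic, hmass]
  split_ifs <;> grind

lemma map_add_right_expMeasure : (expMeasure l).map (· + c) = sExpMeasure l c := by
  have hcomp : exponentialPDF l = (fun x => ENNReal.ofReal (sExpPdf l c x)) ∘ (· + c) := by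
    ext x
    simp [exponentialPDF_eq, sExpPdf_eq_ite]
  rw [sExpMeasure, ← map_withDensity_comp (measurePreserving_add_right volume c)
    measurable_sExpPdf.ennreal_ofReal, ← hcomp]
  rfl

lemma isProbabilityMeasure_sExpMeasure (hl : 0 < l) : IsProbabilityMeasure (sExpMeasure l c) := by
  have := isProbabilityMeasure_expMeasure hl
  rw [← map_add_right_expMeasure]
  exact Measure.isProbabilityMeasure_map (by fun_prop)

lemma cdf_sExpMeasure (hl : 0 < l) (x : ℝ) :
    cdf (sExpMeasure l c) x = if c ≤ x then 1 - Real.exp (-(l * (x - c))) else 0 := by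
  have := isProbabilityMeasure_expMeasure hl
  have := isProbabilityMeasure_sExpMeasure (c := c) hl
  have hpre : (· + c) ⁻¹' Iic x = Iic (x - c) := by ext; simp [le_sub_iff_add_le]
  rw [cdf_eq_real, ← map_add_right_expMeasure, map_measureReal_apply (by fun_prop)
    measurableSet_Iic, hpre, ← cdf_eq_real, cdf_expMeasure_eq hl]
  simp only [sub_nonneg]

lemma one_sub_exp_pos (hl : 0 < l) (hc : c₁ < c₂) : 0 < 1 - Real.exp (-(l * (c₂ - c₁))) := by
  rw [sub_pos, Real.exp_lt_one_iff, neg_neg_iff_pos]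
  exact mul_pos hl (sub_pos.2 hc)

lemma sExpMeasure_Iic (hl : 0 < l) (hc : c₁ ≤ c₂) :
    sExpMeasure l c₁ (Iic c₂) = ENNReal.ofReal (1 - Real.exp (-(l * (c₂ - c₁)))) := by
  have := isProbabilityMeasure_sExpMeasure (c := c₁) hl
  rw [← ofReal_cdf, cdf_sExpMeasure hl, if_pos hc]

lemma cond_Iic_sExpMeasure (hl : 0 < l) (hc : c₁ < c₂) :
    (sExpMeasure l c₁)[|Iic c₂] = stExpMeasure l c₁ c₂ := by
  have hmass := one_sub_exp_pos hl hc
  rw [ProbabilityTheory.cond, sExpMeasure_Iic hl hc.le, sExpMeasure, stExpMeasure,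
    restrict_withDensity measurableSet_Iic, ← withDensity_indicator measurableSet_Iic,
    ← withDensity_smul _ (measurable_sExpPdf.ennreal_ofReal.indicator measurableSet_Iic),
    ← ENNReal.ofReal_inv_of_pos hmass]
  congr with x
  rw [stExpPdf_eq_indicator hl.ne', Pi.smul_apply, smul_eq_mul]
  by_cases hx : x ∈ Iic c₂ <;> simp [hx, ENNReal.ofReal_mul (inv_nonneg.2 hmass.le)]

lemma isProbabilityMeasure_stExpMeasure (hl : 0 < l) (hc : c₁ < c₂) :
    IsProbabilityMeasure (stExpMeasure l c₁ c₂) := by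
  have := isProbabilityMeasure_sExpMeasure (c := c₁) hl
  rw [← cond_Iic_sExpMeasure hl hc]
  apply cond_isProbabilityMeasure
  simpa [sExpMeasure_Iic hl hc.le] using one_sub_exp_pos hl hc

lemma cdf_stExpMeasure (hl : 0 < l) {x : ℝ} (hx : x ∈ Icc c₁ c₂) (hc : c₁ < c₂) :
    cdf (stExpMeasure l c₁ c₂) x =
      (1 - Real.exp (-(l * (x - c₁)))) / (1 - Real.exp (-(l * (c₂ - c₁)))) := by
  have := isProbabilityMeasure_stExpMeasure hl hc
  have := isProbabilityMeasure_sExpMeasure (c := c₁) hl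
  rw [cdf_eq_real, ← cond_Iic_sExpMeasure hl hc, measureReal_def, cond_apply measurableSet_Iic,
    inter_eq_self_of_subset_right (Iic_subset_Iic.2 hx.2), ENNReal.toReal_mul, ENNReal.toReal_inv,
    ← measureReal_def, ← measureReal_def, ← cdf_eq_real, ← cdf_eq_real, cdf_sExpMeasure hl,
    cdf_sExpMeasure hl, if_pos hx.1, if_pos hc.le, inv_mul_eq_div]

end Exponential

section Memoryless

variable {f : ℝ → ℝ} {E : ℝ}

lemma mul_integral_eq_of_add_eq_mul (hE : 0 ≤ E)
    (hmul : ∀ t, 0 ≤ t → ∀ s ∈ Icc 0 E, f (t + s) = f t * f s) {t : ℝ} (ht : 0 ≤ t) :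
    f t * ∫ s in 0..E, f s = ∫ s in t..t + E, f s := by
  calc f t * ∫ s in 0..E, f s = ∫ s in 0..E, f t * f s := by
        rw [intervalIntegral.integral_const_mul]
    _ = ∫ s in 0..E, f (t + s) :=
        intervalIntegral.integral_congr fun s hs => (hmul t ht s (uIcc_of_le hE ▸ hs)).symm
    _ = ∫ s in t..t + E, f s := by
        rw [intervalIntegral.integral_comp_add_left, add_zero]

lemma hasDerivAt_integral_add_right (hf : Continuous f) (E t : ℝ) :
    HasDerivAt (fun t => ∫ s in t..t + E, f s) (f (t + E) - f t) t := by
  have hint (a b : ℝ) : IntervalIntegrable f volume a b := hf.intervalIntegrable a b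
  have hprim (x : ℝ) : HasDerivAt (fun b => ∫ s in 0..b, f s) (f x) x :=
    intervalIntegral.integral_hasDerivAt_right (hint _ _)
      hf.aestronglyMeasurable.stronglyMeasurableAtFilter hf.continuousAt
  have hsub : (fun t => ∫ s in t..t + E, f s) =
      fun t => (∫ s in 0..t + E, f s) - ∫ s in 0..t, f s := by
    ext t
    rw [intervalIntegral.integral_interval_sub_left (hint _ _) (hint _ _)]
  rw [hsub]
  exact ((hprim (t + E)).comp_add_const t E).sub (hprim t)

-- Averaging the functional equation over `s ∈ [0, E]` shows that `f` is differentiable and solves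
-- `f' = k f` on `[0, ∞)`.
lemma exists_eq_exp_of_add_eq_mul (hf : Continuous f) (hf0 : ∀ t, 0 ≤ f t) (hf1 : f 0 = 1)
    (hE : 0 < E) (hmul : ∀ t, 0 ≤ t → ∀ s ∈ Icc 0 E, f (t + s) = f t * f s) :
    ∃ l, ∀ t, 0 ≤ t → f t = Real.exp (-(l * t)) := by
  set A := ∫ s in 0..E, f s
  have hA : A ≠ 0 := (intervalIntegral.integral_pos hE hf.continuousOn (fun t _ => hf0 t)
    ⟨0, left_mem_Icc.2 hE.le, by simp [hf1]⟩).ne'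
  set g : ℝ → ℝ := fun t => (∫ s in t..t + E, f s) / A
  have hfg {t : ℝ} (ht : 0 ≤ t) : f t = g t :=
    eq_div_of_mul_eq hA (mul_integral_eq_of_add_eq_mul hE.le hmul ht)
  set l := (1 - f E) / A
  have hg {t : ℝ} (ht : 0 ≤ t) : HasDerivAt g (-l * g t) t := by
    refine ((hasDerivAt_integral_add_right hf E t).div_const A).congr_deriv ?_
    rw [hmul t ht E (right_mem_Icc.2 hE.le), ← hfg ht]
    ring
  have hgexp {t : ℝ} (ht : 0 ≤ t) : HasDerivAt (fun t => g t * Real.exp (l * t)) 0 t := by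
    refine ((hg ht).mul ((hasDerivAt_id t).const_mul l).exp).congr_deriv ?_
    simp only [id_eq]
    ring
  refine ⟨l, fun t ht => ?_⟩
  have hconst := constant_of_has_deriv_right_zero
    (fun x hx => (hgexp hx.1).continuousAt.continuousWithinAt)
    (fun x hx => (hgexp hx.1).hasDerivWithinAt) t (right_mem_Icc.2 ht)
  rw [← hfg ht, ← hfg le_rfl, hf1] at hconst
  rw [Real.exp_neg]
  exact eq_inv_of_mul_eq_one_left (by simpa using hconst)

end Memoryless

section F3

lemma F3_of_le {p : ℝ × ℝ} (h : -p.1 ≤ p.2) : F3 p = (-p.1, 2 * p.1 + p.2) := by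
  rw [F3, min_eq_left h]
  ring_nf

lemma F3_of_ge {p : ℝ × ℝ} (h : p.2 ≤ -p.1) : F3 p = p.swap := by
  rw [F3, min_eq_right h]
  ext <;> simp

lemma measurable_F3 : Measurable F3 := by
  unfold F3
  fun_prop

-- `min (-x) y = y - max (x + y) 0`, so in the coordinates `(x + y, y)` the map is a shear.
lemma measurePreserving_F3 : MeasurePreserving F3 (volume.prod volume) (volume.prod volume) := by
  have hshear : MeasurePreserving (fun p : ℝ × ℝ => (p.1, p.2 - max p.1 0))
      (volume.prod volume) (volume.prod volume) :=
    (MeasurePreserving.id volume).skew_product (g := fun s y => y - max s 0) (by fun_prop)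
      (ae_of_all _ fun s => (measurePreserving_sub_right volume (max s 0)).map_eq)
  convert (measurePreserving_prod_sub_swap volume volume).comp
    (hshear.comp (measurePreserving_add_prod volume volume)) using 1
  have hmin (x y : ℝ) : min (-x) y = y - max (x + y) 0 := by grind
  ext p <;> simp only [F3, hmin, Function.comp_apply]
  ring

-- Both sides are proportional to `exp (-l * (x + y))`, and `F3` preserves `x + y`.
lemma stExpPdf_mul_sExpPdf_F3 (l c₁ c₂ : ℝ) (p : ℝ × ℝ) :
    stExpPdf l (-c₂) c₁ (F3 p).1 * sExpPdf l (-c₁) (F3 p).2 =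
      stExpPdf l (-c₁) c₂ p.1 * sExpPdf l (-c₂) p.2 := by
  have hsupp : ((-c₂ ≤ (F3 p).1 ∧ (F3 p).1 ≤ c₁) ∧ -c₁ ≤ (F3 p).2) ↔
      ((-c₁ ≤ p.1 ∧ p.1 ≤ c₂) ∧ -c₂ ≤ p.2) := by
    simp only [F3]
    grind
  have hexp : Real.exp (-(l * (F3 p).1)) * Real.exp (-(l * (F3 p).2)) =
      Real.exp (-(l * p.1)) * Real.exp (-(l * p.2)) := by
    rw [← Real.exp_add, ← Real.exp_add, F3]
    ring_nf
  have hZ : (Real.exp (-(l * -c₂)) - Real.exp (-(l * c₁))) * Real.exp (-(l * -c₁)) =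
      (Real.exp (-(l * -c₁)) - Real.exp (-(l * c₂))) * Real.exp (-(l * -c₂)) := by
    simp only [sub_mul, ← Real.exp_add]
    ring_nf
  simp only [stExpPdf, sExpPdf, ite_zero_mul_ite_zero, hsupp, div_mul_div_comm, hexp,
    mul_mul_mul_comm (1 / l), hZ]

lemma map_F3_stExpMeasure_prod_sExpMeasure {l : ℝ} (hl : 0 ≤ l) (c₁ c₂ : ℝ) :
    ((stExpMeasure l (-c₁) c₂).prod (sExpMeasure l (-c₂))).map F3 =
      (stExpMeasure l (-c₂) c₁).prod (sExpMeasure l (-c₁)) := by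
  have hprod (a b c : ℝ) : (stExpMeasure l a b).prod (sExpMeasure l c) =
      (volume.prod volume).withDensity
        fun p => ENNReal.ofReal (stExpPdf l a b p.1 * sExpPdf l c p.2) := by
    simp only [stExpMeasure, sExpMeasure, ENNReal.ofReal_mul (stExpPdf_nonneg hl _)]
    exact prod_withDensity measurable_stExpPdf.ennreal_ofReal measurable_sExpPdf.ennreal_ofReal
  have hmeas : Measurable fun p : ℝ × ℝ =>
      ENNReal.ofReal (stExpPdf l (-c₂) c₁ p.1 * sExpPdf l (-c₁) p.2) :=
    ((measurable_stExpPdf.comp measurable_fst).mul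
      (measurable_sExpPdf.comp measurable_snd)).ennreal_ofReal
  simp only [hprod, ← map_withDensity_comp measurePreserving_F3 hmeas, Function.comp_def,
    stExpPdf_mul_sExpPdf_F3]

end F3

section Cdf

variable {μ ν : Measure ℝ}

lemma continuous_cdf [IsProbabilityMeasure μ] [NullSingletonClass μ] : Continuous (cdf μ) := by
  refine continuous_iff_continuousAt.2 fun x => ?_
  have hle : cdf μ x ≤ Function.leftLim (cdf μ) x := by
    rw [← sub_nonpos, ← ENNReal.ofReal_eq_zero, ← StieltjesFunction.measure_singleton,
      measure_cdf, measure_singleton]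
  rw [(monotone_cdf μ).continuousAt_iff_leftLim_eq_rightLim, StieltjesFunction.rightLim_eq]
  exact ((monotone_cdf μ).leftLim_le le_rfl).antisymm hle

lemma measureReal_Ioi_eq_one_sub_cdf [IsProbabilityMeasure μ] (x : ℝ) :
    μ.real (Ioi x) = 1 - cdf μ x := by
  rw [cdf_eq_real, ← compl_Iic, probReal_compl_eq_one_sub measurableSet_Iic]

lemma continuous_measureReal_Ioi [IsProbabilityMeasure μ] [NullSingletonClass μ] :
    Continuous fun x => μ.real (Ioi x) := by
  simp only [measureReal_Ioi_eq_one_sub_cdf]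
  exact continuous_const.sub continuous_cdf

lemma measurable_measure_Ioi : Measurable fun x => μ (Ioi x) :=
  Antitone.measurable fun _ _ hxy => measure_mono (Ioi_subset_Ioi hxy)

lemma cdf_eq_zero_of_ae_le [IsProbabilityMeasure μ] [NullSingletonClass μ] {a : ℝ}
    (h : ∀ᵐ x ∂μ, a ≤ x) : cdf μ a = 0 := by
  rw [cdf_eq_real, ← measureReal_congr Iio_ae_eq_Iic, measureReal_eq_zero_iff]
  simpa [ae_iff, Iio_def] using h

lemma cdf_left_eq_zero_of_support_eq_Icc [IsProbabilityMeasure μ] [NullSingletonClass μ] {a b : ℝ}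
    (hμ : μ.support = Icc a b) : cdf μ a = 0 := cdf_eq_zero_of_ae_le <| by
  filter_upwards [Measure.support_mem_ae (μ := μ)] with x hx using (hμ ▸ hx).1

lemma cdf_pos_of_mem_support [IsProbabilityMeasure μ] {x y : ℝ} (hx : x ∈ μ.support)
    (hxy : x < y) : 0 < cdf μ y := by
  rw [cdf_eq_real]
  exact ENNReal.toReal_pos ((Measure.mem_support_iff_forall x).1 hx _ (Iic_mem_nhds hxy)).ne'
    (measure_ne_top _ _)

lemma eq_of_eqOn_cdf_Ici [IsProbabilityMeasure μ] [IsProbabilityMeasure ν] {a : ℝ}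
    (ha : cdf ν a = 0) (h : EqOn (cdf μ) (cdf ν) (Ici a)) : μ = ν := by
  refine Measure.eq_of_cdf μ ν (StieltjesFunction.ext fun x => ?_)
  rcases le_total a x with hx | hx
  · exact h hx
  · have hμ : cdf μ x ≤ 0 := (monotone_cdf μ hx).trans_eq ((h self_mem_Ici).trans ha)
    have hν : cdf ν x ≤ 0 := (monotone_cdf ν hx).trans_eq ha
    rw [hμ.antisymm (cdf_nonneg μ x), hν.antisymm (cdf_nonneg ν x)]

lemma eq_of_eqOn_cdf_Icc [IsProbabilityMeasure μ] [IsProbabilityMeasure ν] {a b : ℝ}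
    (hab : a ≤ b) (ha : cdf ν a = 0) (hb : cdf ν b = 1) (h : EqOn (cdf μ) (cdf ν) (Icc a b)) :
    μ = ν := by
  refine eq_of_eqOn_cdf_Ici ha fun x hx => ?_
  rcases le_total x b with hxb | hbx
  · exact h ⟨hx, hxb⟩
  · have hμ : 1 ≤ cdf μ x := ((h ⟨hab, le_rfl⟩).trans hb).symm.trans_le (monotone_cdf μ hbx)
    have hν : 1 ≤ cdf ν x := hb.symm.trans_le (monotone_cdf ν hbx)
    rw [(cdf_le_one μ x).antisymm hμ, (cdf_le_one ν x).antisymm hν]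

end Cdf

section Density

variable {α : Type*} [MeasurableSpace α] {μ : Measure α} {f : α → ENNReal}

lemma nullSingletonClass_withDensity [NullSingletonClass μ] :
    NullSingletonClass (μ.withDensity f) :=
  ⟨fun x => withDensity_absolutelyContinuous μ f (measure_singleton x)⟩

lemma ae_mem_withDensity {s : Set α} (hs : MeasurableSet s) (hfs : ∀ x ∉ s, f x = 0) :
    ∀ᵐ x ∂μ.withDensity f, x ∈ s := by
  change μ.withDensity f sᶜ = 0
  rw [withDensity_apply _ hs.compl]
  exact setLIntegral_eq_zero hs.compl hfs

end Density

section Support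

variable {α : Type*} [TopologicalSpace α] [MeasurableSpace α] {μ : Measure α}

lemma eqOn_support_of_ae_eq {β : Type*} [TopologicalSpace β] [T2Space β] {f g : α → β}
    (hf : Continuous f) (hg : Continuous g) (h : f =ᵐ[μ] g) : EqOn f g μ.support :=
  Measure.support_subset_of_isClosed (isClosed_eq hf hg) h

lemma support_withDensity_eq [OpensMeasurableSpace α] [μ.IsOpenPosMeasure] {f : α → ENNReal}
    {s : Set α} (hs : s ⊆ closure (interior s)) (hsc : IsClosed s)
    (hf : AEMeasurable f (μ.restrict (interior s)))
    (hf0 : ∀ x ∈ interior s, f x ≠ 0) (hfs : ∀ x ∉ s, f x = 0) :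
    (μ.withDensity f).support = s := by
  refine Subset.antisymm (Measure.support_subset_of_isClosed hsc
    (ae_mem_withDensity hsc.measurableSet hfs)) fun x hx =>
    (Measure.mem_support_iff_forall x).2 fun U hU => ?_
  set V := interior U ∩ interior s
  have hV : IsOpen V := isOpen_interior.inter isOpen_interior
  have hVne : V.Nonempty := mem_closure_iff_nhds.1 (hs hx) _ (interior_mem_nhds.2 hU)
  refine lt_of_lt_of_le (pos_iff_ne_zero.2 fun hV0 => ?_)
    (measure_mono (inter_subset_left.trans interior_subset : V ⊆ U))
  rw [withDensity_apply _ hV.measurableSet, setLIntegral_eq_zero_iff' hV.measurableSet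
    (hf.mono_measure (Measure.restrict_mono inter_subset_right le_rfl))] at hV0
  refine hV.measure_ne_zero μ hVne (measure_eq_zero_iff_ae_notMem.2 ?_)
  filter_upwards [hV0] with y hy hyV using hf0 y hyV.2 (hy hyV)

end Support

lemma support_withDensity_ofReal_eq_Icc {f : ℝ → ℝ} {a b : ℝ} (hab : a < b)
    (hf : ContinuousOn f (Ioo a b)) (hf0 : ∀ x ∈ Ioo a b, 0 < f x)
    (hfs : ∀ x ∉ Icc a b, f x = 0) :
    (volume.withDensity fun x => ENNReal.ofReal (f x)).support = Icc a b := by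
  refine support_withDensity_eq ?_ isClosed_Icc ?_ ?_ fun x hx => by simp [hfs x hx]
  all_goals rw [interior_Icc]
  · rw [closure_Ioo hab.ne]
  · exact (hf.aemeasurable measurableSet_Ioo).ennreal_ofReal
  · exact fun x hx => (ENNReal.ofReal_pos.2 (hf0 x hx)).ne'

lemma exists_eq_sExpMeasure_of_memoryless {ν : Measure ℝ} [IsProbabilityMeasure ν]
    [NullSingletonClass ν] {c E : ℝ} (hc : cdf ν c = 0) (hE : 0 < E)
    (hmul : ∀ t, 0 ≤ t → ∀ s ∈ Icc 0 E,
      ν.real (Ioi (c + (t + s))) = ν.real (Ioi (c + t)) * ν.real (Ioi (c + s))) :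
    ∃ l, 0 < l ∧ ν = sExpMeasure l c := by
  obtain ⟨l, hl⟩ := exists_eq_exp_of_add_eq_mul (f := fun t => ν.real (Ioi (c + t)))
    (continuous_measureReal_Ioi.comp (by fun_prop)) (fun _ => measureReal_nonneg)
    (by simp [measureReal_Ioi_eq_one_sub_cdf, hc]) hE hmul
  have hcdf {x : ℝ} (hx : c ≤ x) : cdf ν x = 1 - Real.exp (-(l * (x - c))) := by
    rw [← hl _ (sub_nonneg.2 hx), add_sub_cancel, measureReal_Ioi_eq_one_sub_cdf, sub_sub_cancel]
  obtain ⟨x, hx, hcx⟩ :=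
    (((tendsto_cdf_atTop ν).eventually_const_lt one_pos).and (eventually_ge_atTop c)).exists
  have hl0 : 0 < l := by
    rw [hcdf hcx, sub_pos, Real.exp_lt_one_iff, neg_neg_iff_pos] at hx
    exact pos_of_mul_pos_left hx (sub_nonneg.2 hcx)
  have := isProbabilityMeasure_sExpMeasure (c := c) hl0
  refine ⟨l, hl0, eq_of_eqOn_cdf_Ici (a := c) (by simp [cdf_sExpMeasure hl0]) fun x hx => ?_⟩
  rw [hcdf hx, cdf_sExpMeasure hl0, if_pos (mem_Ici.1 hx)]

section Product

variable {μ ν α β : Measure ℝ}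

lemma F3_mem_neg_prod_Ioi {x y v : ℝ} {B : Set ℝ} (hx : x ≤ v) :
    F3 (x, y) ∈ (Neg.neg ⁻¹' B) ×ˢ Ioi v ↔ x ∈ B ∧ v - 2 * x < y := by
  rcases le_total (-x) y with h | h
  · rw [F3_of_le h]
    simp only [mem_prod, mem_preimage, neg_neg, mem_Ioi, sub_lt_iff_lt_add']
  · rw [F3_of_ge h]
    simp only [Prod.swap, mem_prod, mem_Ioi]
    constructor <;> rintro ⟨-, hy⟩ <;> linarith

lemma F3_mem_Iic_prod_Iic {r s : ℝ} (hrs : r ≤ s) (p : ℝ × ℝ) :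
    F3 p ∈ Iic (-s) ×ˢ Iic r ↔ p ∈ Iic r ×ˢ Iic (-s) := by
  simp only [F3, mem_prod, mem_Iic]
  grind

lemma F3_mem_Ioi_prod_univ (s : ℝ) (p : ℝ × ℝ) :
    F3 p ∈ Ioi (-s) ×ˢ univ ↔ p ∈ Iio s ×ˢ Ioi (-s) := by
  simp [F3]

lemma setLIntegral_measure_Ioi_of_map_F3 [SFinite ν] [SFinite β] (h : (μ.prod ν).map F3 = α.prod β)
    {v : ℝ} (hv : ∀ᵐ x ∂μ, x ≤ v) {B : Set ℝ} (hB : MeasurableSet B) :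
    ∫⁻ x in B, ν (Ioi (v - 2 * x)) ∂μ = α (Neg.neg ⁻¹' B) * β (Ioi v) := by
  have hmeas : MeasurableSet ((Neg.neg ⁻¹' B) ×ˢ Ioi v) :=
    (measurable_neg hB).prod measurableSet_Ioi
  rw [← Measure.prod_prod, ← h, Measure.map_apply measurable_F3 hmeas,
    Measure.prod_apply (measurable_F3 hmeas), ← lintegral_indicator hB]
  refine lintegral_congr_ae ?_
  filter_upwards [hv] with x hx
  have hslice : Prod.mk x ⁻¹' (F3 ⁻¹' ((Neg.neg ⁻¹' B) ×ˢ Ioi v)) =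
      {y | x ∈ B ∧ v - 2 * x < y} := ext fun y => F3_mem_neg_prod_Ioi hx
  by_cases hxB : x ∈ B
  · simp only [hslice, hxB, indicator_of_mem, true_and, Ioi_def]
  · simp only [hslice, hxB, indicator_of_notMem, not_false_eq_true, false_and, ofPred_false,
      measure_empty]

variable [IsProbabilityMeasure ν] [IsProbabilityMeasure β]

lemma measureReal_Ioi_ne_zero_of_map_F3 [NullSingletonClass ν]
    (h : (μ.prod ν).map F3 = α.prod β) {b : ℝ} (hb : ∀ᵐ x ∂μ, x ≤ b) (hbμ : b ∈ μ.support)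
    (hν : ν.real (Ioi (-b)) ≠ 0) : β.real (Ioi b) ≠ 0 := by
  intro hβ
  rw [measureReal_eq_zero_iff] at hβ
  have hlintegral : ∫⁻ x, ν (Ioi (b - 2 * x)) ∂μ = 0 := by
    simpa [hβ] using setLIntegral_measure_Ioi_of_map_F3 h hb MeasurableSet.univ
  have hmeas : Measurable fun x => ν (Ioi (b - 2 * x)) :=
    measurable_measure_Ioi.comp (by fun_prop)
  have hae : (fun x => ν.real (Ioi (b - 2 * x))) =ᵐ[μ] fun _ => 0 := by
    filter_upwards [(lintegral_eq_zero_iff hmeas).1 hlintegral] with x hx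
    rw [measureReal_def, hx, Pi.zero_apply, ENNReal.toReal_zero]
  have hcont : Continuous fun x => ν.real (Ioi (b - 2 * x)) :=
    continuous_measureReal_Ioi.comp (by fun_prop)
  have hzero := eqOn_support_of_ae_eq hcont continuous_const hae hbμ
  simp only [show b - 2 * b = -b by ring] at hzero
  exact hν hzero

variable [IsProbabilityMeasure μ]

lemma measureReal_Ioi_mul_eq_of_map_F3 [NullSingletonClass ν]
    (h : (μ.prod ν).map F3 = α.prod β) {v w : ℝ} (hv : ∀ᵐ x ∂μ, x ≤ v) (hw : ∀ᵐ x ∂μ, x ≤ w)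
    {x : ℝ} (hx : x ∈ μ.support) :
    β.real (Ioi w) * ν.real (Ioi (v - 2 * x)) = β.real (Ioi v) * ν.real (Ioi (w - 2 * x)) := by
  have hmeas (u : ℝ) : Measurable fun x => ν (Ioi (u - 2 * x)) :=
    measurable_measure_Ioi.comp (by fun_prop)
  have hae : (fun x => β (Ioi w) * ν (Ioi (v - 2 * x))) =ᵐ[μ]
      fun x => β (Ioi v) * ν (Ioi (w - 2 * x)) := by
    refine ae_eq_of_forall_setLIntegral_eq_of_sigmaFinite ((hmeas v).const_mul _)
      ((hmeas w).const_mul _) fun B hB _ => ?_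
    rw [lintegral_const_mul _ (hmeas v), lintegral_const_mul _ (hmeas w),
      setLIntegral_measure_Ioi_of_map_F3 h hv hB, setLIntegral_measure_Ioi_of_map_F3 h hw hB]
    ring
  have hcont (u v : ℝ) : Continuous fun x => β.real (Ioi u) * ν.real (Ioi (v - 2 * x)) :=
    continuous_const.mul (continuous_measureReal_Ioi.comp (by fun_prop))
  refine eqOn_support_of_ae_eq (hcont w v) (hcont v w) ?_ hx
  filter_upwards [hae] with x hx
  simpa only [ENNReal.toReal_mul, ← measureReal_def] using congrArg ENNReal.toReal hx

lemma measureReal_Ioi_add_eq_mul_of_map_F3 [NullSingletonClass ν]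
    (h : (μ.prod ν).map F3 = α.prod β) {b : ℝ} (hb : ∀ᵐ x ∂μ, x ≤ b) (hbμ : b ∈ μ.support)
    (hν : ν.real (Ioi (-b)) = 1) {t s : ℝ} (ht : 0 ≤ t) (hs : b - s / 2 ∈ μ.support) :
    ν.real (Ioi (-b + (t + s))) = ν.real (Ioi (-b + t)) * ν.real (Ioi (-b + s)) := by
  have hbt : ∀ᵐ x ∂μ, x ≤ b + t := hb.mono fun x hx => by linarith
  have hβ := measureReal_Ioi_ne_zero_of_map_F3 h hb hbμ (by simp [hν])
  have hβt : β.real (Ioi b) * ν.real (Ioi (-b + t)) = β.real (Ioi (b + t)) := by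
    have hbb := measureReal_Ioi_mul_eq_of_map_F3 h hbt hb hbμ
    rwa [show b - 2 * b = -b by ring, hν, mul_one, show b + t - 2 * b = -b + t by ring] at hbb
  have hts := measureReal_Ioi_mul_eq_of_map_F3 h hbt hb hs
  rw [← hβt, mul_assoc, show b + t - 2 * (b - s / 2) = -b + (t + s) by ring,
    show b - 2 * (b - s / 2) = -b + s by ring] at hts
  exact mul_left_cancel₀ hβ hts

lemma exists_eq_sExpMeasure_of_map_F3 [NullSingletonClass ν]
    (h : (μ.prod ν).map F3 = α.prod β) {a b : ℝ} (hab : a < b) (hμ : μ.support = Icc a b)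
    (hν : ∀ᵐ y ∂ν, -b ≤ y) : ∃ l, 0 < l ∧ ν = sExpMeasure l (-b) := by
  have hb : ∀ᵐ x ∂μ, x ≤ b := by
    filter_upwards [Measure.support_mem_ae (μ := μ)] with x hx using (hμ ▸ hx).2
  have hcdf : cdf ν (-b) = 0 := cdf_eq_zero_of_ae_le hν
  have hone : ν.real (Ioi (-b)) = 1 := by
    rw [measureReal_Ioi_eq_one_sub_cdf, hcdf, sub_zero]
  refine exists_eq_sExpMeasure_of_memoryless hcdf (E := 2 * (b - a)) (by linarith)
    fun t ht s hs => ?_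
  exact measureReal_Ioi_add_eq_mul_of_map_F3 h hb (hμ ▸ right_mem_Icc.2 hab.le) hone ht
    (hμ ▸ ⟨by linarith [hs.2], by linarith [hs.1]⟩)

variable [IsProbabilityMeasure α]

lemma cdf_mul_one_sub_eq_of_map_F3 [NullSingletonClass μ]
    (h : (μ.prod ν).map F3 = α.prod β) {r s : ℝ} (hrs : r ≤ s) :
    cdf β r * (1 - cdf μ s * ν.real (Ioi (-s))) = cdf μ r * (1 - ν.real (Ioi (-s))) := by
  have hpre {A B C D : Set ℝ} (hA : MeasurableSet A) (hB : MeasurableSet B)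
      (hF : ∀ p, F3 p ∈ A ×ˢ B ↔ p ∈ C ×ˢ D) :
      α.real A * β.real B = μ.real C * ν.real D := by
    rw [← measureReal_prod_prod, ← measureReal_prod_prod, ← h,
      map_measureReal_apply measurable_F3 (hA.prod hB)]
    exact congrArg _ (ext hF)
  have hIic := hpre measurableSet_Iic measurableSet_Iic (F3_mem_Iic_prod_Iic hrs)
  have hIoi := hpre measurableSet_Ioi MeasurableSet.univ (F3_mem_Ioi_prod_univ s)
  rw [measureReal_congr Iio_ae_eq_Iic, probReal_univ, mul_one] at hIoi
  have hα := measureReal_Ioi_eq_one_sub_cdf (μ := α) (-s)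
  have hν := measureReal_Ioi_eq_one_sub_cdf (μ := ν) (-s)
  simp only [← cdf_eq_real] at hIic hIoi
  rw [← hIoi, hα, hν, sub_sub_cancel, sub_sub_cancel, mul_comm, hIic]

lemma one_sub_cdf_mul_eq_of_map_F3 [NullSingletonClass μ]
    (h : (μ.prod ν).map F3 = α.prod β) {r s : ℝ} (hrs : r ≤ s) (hr : cdf μ r ≠ 0) :
    (1 - cdf μ r * ν.real (Ioi (-r))) * (1 - ν.real (Ioi (-s))) =
      (1 - cdf μ s * ν.real (Ioi (-s))) * (1 - ν.real (Ioi (-r))) := by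
  have hrr := cdf_mul_one_sub_eq_of_map_F3 h (le_refl r)
  have hrs := cdf_mul_one_sub_eq_of_map_F3 h hrs
  refine mul_left_cancel₀ hr ?_
  rw [mul_left_comm, ← hrs, mul_left_comm (cdf μ r), ← hrr]
  ring

lemma cdf_eq_of_map_F3 [NullSingletonClass μ] {l a b : ℝ} (hl : 0 < l)
    (h : (μ.prod (sExpMeasure l (-b))).map F3 = α.prod β) (hμ : μ.support = Icc a b)
    {s : ℝ} (hs : s ∈ Ioc a b) :
    cdf μ s = (1 - Real.exp (-(l * (s - a)))) / (1 - Real.exp (-(l * (b - a)))) := by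
  have := isProbabilityMeasure_sExpMeasure (c := -b) hl
  set e : ℝ → ℝ := fun r => Real.exp (-(l * (b - r)))
  have he {r : ℝ} (hr : r ≤ b) : (sExpMeasure l (-b)).real (Ioi (-r)) = e r := by
    rw [measureReal_Ioi_eq_one_sub_cdf, cdf_sExpMeasure hl, if_pos (neg_le_neg hr), sub_sub_cancel,
      neg_sub_neg]
  have hcont := continuous_cdf (μ := μ)
  have hEq : EqOn (fun r => (1 - cdf μ r * e r) * (1 - e s))
      (fun r => (1 - cdf μ s * e s) * (1 - e r)) (Ioo a s) := fun r hr => by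
    have hpos := cdf_pos_of_mem_support (hμ ▸ left_mem_Icc.2 (hs.1.le.trans hs.2)) hr.1
    simpa only [he hs.2, he (hr.2.le.trans hs.2)] using
      one_sub_cdf_mul_eq_of_map_F3 h hr.2.le hpos.ne'
  have hlim := hEq.closure (by fun_prop) (by fun_prop)
    (closure_Ioo hs.1.ne ▸ left_mem_Icc.2 hs.1.le)
  simp only [cdf_left_eq_zero_of_support_eq_Icc hμ, zero_mul, sub_zero, one_mul] at hlim
  have hea : e a = e s * Real.exp (-(l * (s - a))) := by
    simp only [e, ← Real.exp_add]
    ring_nf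
  rw [eq_div_iff (one_sub_exp_pos hl (hs.1.trans_le hs.2)).ne']
  refine mul_left_cancel₀ (Real.exp_ne_zero _ : e s ≠ 0) ?_
  change e s * (cdf μ s * (1 - e a)) = e s * (1 - Real.exp (-(l * (s - a))))
  linear_combination hlim - hea

lemma eq_stExpMeasure_of_map_F3 [NullSingletonClass μ] {l a b : ℝ} (hl : 0 < l)
    (h : (μ.prod (sExpMeasure l (-b))).map F3 = α.prod β) (hab : a < b)
    (hμ : μ.support = Icc a b) : μ = stExpMeasure l a b := by
  have := isProbabilityMeasure_stExpMeasure hl hab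
  have hcdf {x : ℝ} (hx : x ∈ Icc a b) := cdf_stExpMeasure hl hx hab
  have hmass := (one_sub_exp_pos hl hab).ne'
  have ha' : cdf (stExpMeasure l a b) a = 0 := by simp [hcdf (left_mem_Icc.2 hab.le)]
  have hb' : cdf (stExpMeasure l a b) b = 1 := by
    rw [hcdf (right_mem_Icc.2 hab.le), div_self hmass]
  refine eq_of_eqOn_cdf_Icc hab.le ha' hb' fun s hs => ?_
  rcases hs.1.eq_or_lt with rfl | has
  · rw [cdf_left_eq_zero_of_support_eq_Icc hμ, ha']
  · rw [cdf_eq_of_map_F3 hl h hμ ⟨has, hs.2⟩, hcdf hs]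

end Product

section RandomVariables

variable {Ω : Type*} [MeasurableSpace Ω] {P : Measure Ω} [IsProbabilityMeasure P]

lemma indepFun_of_map_prodMk_eq_prod {α β : Type*} [MeasurableSpace α] [MeasurableSpace β]
    {U : Ω → α} {V : Ω → β} (hU : AEMeasurable U P) (hV : AEMeasurable V P)
    {ρ : Measure α} {σ : Measure β} [IsProbabilityMeasure ρ] [IsProbabilityMeasure σ]
    (h : P.map (fun ω => (U ω, V ω)) = ρ.prod σ) : IndepFun U V P := by
  have hρ : P.map U = ρ := by
    rw [← Measure.fst_prod (μ := ρ) (ν := σ), ← h, Measure.fst_map_prodMk₀ hV]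
  have hσ : P.map V = σ := by
    rw [← Measure.snd_prod (μ := ρ) (ν := σ), ← h, Measure.snd_map_prodMk₀ hU]
  rw [indepFun_iff_map_prod_eq_prod_map_map hU hV, h, hρ, hσ]

theorem sExp_characterization_general {X Y : Ω → ℝ} (hX : AEMeasurable X P)
    (hY : AEMeasurable Y P) (hXY : IndepFun X Y P) {c₁ c₂ : ℝ} (hc : -c₁ < c₂)
    [NullSingletonClass (P.map X)] [NullSingletonClass (P.map Y)]
    (hsupp : (P.map X).support = Icc (-c₁) c₂) (hYle : ∀ᵐ y ∂P.map Y, -c₂ ≤ y) :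
    IndepFun (fun ω => (F3 (X ω, Y ω)).1) (fun ω => (F3 (X ω, Y ω)).2) P ↔
      ∃ l, 0 < l ∧ P.map X = stExpMeasure l (-c₁) c₂ ∧ P.map Y = sExpMeasure l (-c₂) := by
  have hF : AEMeasurable (fun ω => F3 (X ω, Y ω)) P :=
    measurable_F3.comp_aemeasurable (hX.prodMk hY)
  have hlaw : P.map (fun ω => F3 (X ω, Y ω)) = ((P.map X).prod (P.map Y)).map F3 := by
    rw [← (indepFun_iff_map_prod_eq_prod_map_map hX hY).1 hXY,
      AEMeasurable.map_map_of_aemeasurable measurable_F3.aemeasurable (hX.prodMk hY)]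
    rfl
  have := Measure.isProbabilityMeasure_map hX
  have := Measure.isProbabilityMeasure_map hY
  have := Measure.isProbabilityMeasure_map hF.fst
  have := Measure.isProbabilityMeasure_map hF.snd
  constructor
  · intro hUV
    have h := hlaw.symm.trans ((indepFun_iff_map_prod_eq_prod_map_map hF.fst hF.snd).1 hUV)
    obtain ⟨l, hl, hYl⟩ := exists_eq_sExpMeasure_of_map_F3 h hc hsupp hYle
    exact ⟨l, hl, eq_stExpMeasure_of_map_F3 hl (hYl ▸ h) hc hsupp, hYl⟩
  · rintro ⟨l, hl, hXl, hYl⟩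
    have := isProbabilityMeasure_stExpMeasure hl (neg_lt.1 hc)
    have := isProbabilityMeasure_sExpMeasure (c := -c₁) hl
    refine indepFun_of_map_prodMk_eq_prod hF.fst hF.snd (hlaw.trans ?_)
      (ρ := stExpMeasure l (-c₂) c₁) (σ := sExpMeasure l (-c₁))
    rw [hXl, hYl, map_F3_stExpMeasure_prod_sExpMeasure hl.le]

end RandomVariables

theorem sExp_characterization
    {Ω : Type*} [MeasureSpace Ω] [IsProbabilityMeasure (ℙ : Measure Ω)]
    (c₁ c₂ : ℝ) (hc₁ : 0 < c₁) (hc₂ : 0 < c₂)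
    (X Y : Ω → ℝ) (hXm : Measurable X) (hYm : Measurable Y)
    (hIndep : IndepFun X Y ℙ)
    (fX fY : ℝ → ℝ)
    (hfX : Measure.map X ℙ = volume.withDensity (fun x => ENNReal.ofReal (fX x)))
    (hfY : Measure.map Y ℙ = volume.withDensity (fun x => ENNReal.ofReal (fY x)))
    (hfXpos : ∀ x ∈ Icc (-c₁) c₂, 0 < fX x)
    (hfXzero : ∀ x ∉ Icc (-c₁) c₂, fX x = 0)
    (hfYpos : ∀ y ∈ Ici (-c₂), 0 < fY y)
    (hfYzero : ∀ y ∉ Ici (-c₂), fY y = 0)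
    (hfXdiff : ∀ x ∈ Ioo (-c₁) c₂,
      DifferentiableAt ℝ fX x ∧ DifferentiableAt ℝ (deriv fX) x)
    (hfYdiff : ∀ y ∈ Ioi (-c₂),
      DifferentiableAt ℝ fY y ∧ DifferentiableAt ℝ (deriv fY) y) :
    IndepFun (fun ω => (F3 (X ω, Y ω)).1) (fun ω => (F3 (X ω, Y ω)).2) ℙ ↔
      ∃ l : ℝ, 0 < l ∧
        Measure.map X ℙ =
          volume.withDensity (fun x => ENNReal.ofReal (stExpPdf l (-c₁) c₂ x)) ∧
        Measure.map Y ℙ =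
          volume.withDensity (fun y => ENNReal.ofReal (sExpPdf l (-c₂) y)) := by
  have : NullSingletonClass (Measure.map X ℙ) := hfX ▸ nullSingletonClass_withDensity
  have : NullSingletonClass (Measure.map Y ℙ) := hfY ▸ nullSingletonClass_withDensity
  have hab : -c₁ < c₂ := (neg_neg_of_pos hc₁).trans hc₂
  refine sExp_characterization_general hXm.aemeasurable hYm.aemeasurable hIndep hab
    (hfX ▸ support_withDensity_ofReal_eq_Icc hab
      (fun x hx => (hfXdiff x hx).1.continuousAt.continuousWithinAt)
      (fun x hx => hfXpos x (Ioo_subset_Icc_self hx)) hfXzero)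
    (hfY ▸ ae_mem_withDensity measurableSet_Ici fun y hy => ?_)
  rw [hfYzero y hy, ENNReal.ofReal_zero]
end
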